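/- arXiv:1902.00966 — 2 statements merged into one kernel-verified Lean document; each statement's English description precedes it below -/
import Mathlib

section
/- There exists a finite planar straight-line unit-distance graph (V,E) in the plane with exactly 38 unit triangles in which every edge is contained in a unit triangle, there are no additional triangles, every vertex has degree 2 or degree 4, and there are two distinct lines g₁ and g₂ through a common point, meeting at angle 2π/169, such that every vertex of degree 2 lies on g₁ ∪ g₂ and the rotation by 2π/169 about the intersection point of g₁ and g₂ maps the set of degree-2 vertices lying on g₁ bijectively onto the set of degree-2 vertices lying on g₂. -/
/-!
Straight-line unit-distance graphs in the Euclidean plane, modelled as ℂ.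
-/

noncomputable section
open scoped Classical

/-- A finite straight-line unit-distance graph in the plane: a finite vertex
set `V ⊆ ℂ` and a finite set `E` of 2-element subsets of `V` (edges), each of
whose two endpoints are at distance one. -/
structure UnitDistGraph where
  V : Finset ℂ
  E : Finset (Finset ℂ)
  edge_sub : ∀ e ∈ E, e ⊆ V
  edge_pair : ∀ e ∈ E, ∃ x y : ℂ, x ≠ y ∧ e = {x, y} ∧ dist x y = 1

namespace UnitDistGraph

/-- The closed segment drawn for an edge (the convex hull of its two endpoints). -/
def edgeSeg (e : Finset ℂ) : Set ℂ := convexHull ℝ (e : Set ℂ)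

/-- The degree of a vertex: the number of edges containing it. -/
def degree (G : UnitDistGraph) (v : ℂ) : ℕ := {e | e ∈ G.E ∧ v ∈ e}.ncard

/-- The graph is drawn planarly: two distinct closed edge segments intersect in
at most a common endpoint, and no vertex lies in the relative interior of an
edge (i.e. a vertex on a closed edge segment is an endpoint of that edge). -/
def Planar (G : UnitDistGraph) : Prop :=
  (∀ e ∈ G.E, ∀ f ∈ G.E, e ≠ f →
    edgeSeg e ∩ edgeSeg f ⊆ (e : Set ℂ) ∩ (f : Set ℂ)) ∧
  (∀ v ∈ G.V, ∀ e ∈ G.E, v ∈ edgeSeg e → v ∈ e)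

/-- The graph is 4-regular: every vertex belongs to exactly 4 edges. -/
def Regular4 (G : UnitDistGraph) : Prop := ∀ v ∈ G.V, G.degree v = 4

/-- A unit triangle: a 3-element subset of `V` all of whose pairs are edges. -/
def IsUnitTriangle (G : UnitDistGraph) (t : Finset ℂ) : Prop :=
  t ⊆ G.V ∧ t.card = 3 ∧ ∀ x ∈ t, ∀ y ∈ t, x ≠ y → ({x, y} : Finset ℂ) ∈ G.E

/-- The number of unit triangles of the graph. -/
def triangleCount (G : UnitDistGraph) : ℕ := {t : Finset ℂ | G.IsUnitTriangle t}.ncard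

/-- The graph consists only of unit triangles: every edge lies in a unit triangle. -/
def OnlyUnitTriangles (G : UnitDistGraph) : Prop :=
  ∀ e ∈ G.E, ∃ t : Finset ℂ, G.IsUnitTriangle t ∧ e ⊆ t

/-- The closed segment from `x` to `y` is a union of closed edge segments of `E`. -/
def SideCovered (G : UnitDistGraph) (x y : ℂ) : Prop :=
  ∃ S : Finset (Finset ℂ), S ⊆ G.E ∧ segment ℝ x y = ⋃ e ∈ S, edgeSeg e

/-- No additional triangles: any equilateral triangle on vertices of `V` each of
whose sides is a union of closed edge segments has side length 1. -/
def NoAdditionalTriangles (G : UnitDistGraph) : Prop :=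
  ∀ x ∈ G.V, ∀ y ∈ G.V, ∀ z ∈ G.V, x ≠ y → y ≠ z → x ≠ z →
    dist x y = dist y z → dist y z = dist z x →
    G.SideCovered x y → G.SideCovered y z → G.SideCovered z x →
    dist x y = 1

end UnitDistGraph

open UnitDistGraph

namespace UnitDistGraph

/-- Rotation of the plane about the center `c` by the angle `θ`. -/
def rot (c : ℂ) (θ : ℝ) (z : ℂ) : ℂ := c + Complex.exp (θ * Complex.I) * (z - c)

/-- The graph is invariant under the rotation about `c` by `θ`: this rotation
maps the vertex set onto itself and the edge set onto itself. -/
def RotInvariant (G : UnitDistGraph) (c : ℂ) (θ : ℝ) : Prop :=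
  (rot c θ) '' (G.V : Set ℂ) = (G.V : Set ℂ) ∧
  (Finset.image (rot c θ)) '' (G.E : Set (Finset ℂ)) = (G.E : Set (Finset ℂ))

/-- The unit triangles of the graph are non-overlapping: the interiors of the
closed triangular regions of two distinct unit triangles are disjoint. -/
def NonOverlapping (G : UnitDistGraph) : Prop :=
  ∀ t₁ t₂ : Finset ℂ, G.IsUnitTriangle t₁ → G.IsUnitTriangle t₂ → t₁ ≠ t₂ →
    interior (convexHull ℝ (t₁ : Set ℂ)) ∩ interior (convexHull ℝ (t₂ : Set ℂ)) = ∅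

/-- The line through the point `c` with direction `d`. -/
def line (c d : ℂ) : Set ℂ := {z : ℂ | ∃ t : ℝ, z = c + (t : ℂ) * d}

/-- Two unit-distance graphs are congruent if some isometry of the plane maps
the vertex set and edge set of one onto those of the other. -/
def Congruent (G₁ G₂ : UnitDistGraph) : Prop :=
  ∃ φ : ℂ ≃ᵢ ℂ, G₁.V.image φ = G₂.V ∧ G₁.E.image (Finset.image φ) = G₂.E

end UnitDistGraph


namespace G2

/-- Common facts on the parameters: `C = cos φ`, `S = sin φ`, `r = √3/2`. -/
structure Par (C S r : ℝ) : Prop where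
  hC : 0 < C
  hS : 0 < S
  hr : 0 < r
  hCS : C ^ 2 + S ^ 2 = 1
  hr2 : r ^ 2 = 3 / 4
  hlt : 2 * r * S < C

/-- heights of the hinges of the upper chain -/
def ht (C S r : ℝ) (k : ℕ) : ℝ := r * C - (-1) ^ k * S / 2

/-- hinges of the chain (`ε = 1`) and of the mirrored chain (`ε = -1`) -/
def P (C S r : ℝ) (ε : ℝ) (k : ℕ) : ℂ := ⟨k * C, ε * ht C S r k⟩

/-- the hinges on the mirror axis -/
def Q (C S r : ℝ) (k : ℕ) : ℂ := ⟨k * C + (C / 2 + (-1) ^ k * r * S), 0⟩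

/-- numbering of the vertices -/
def pos (C S r : ℝ) (v : ℕ) : ℂ :=
  if v < 20 then P C S r 1 v else if v < 40 then P C S r (-1) (v - 20) else Q C S r (v - 40)

/-- triangles, as triples of vertex numbers -/
def T0 : List (ℕ × ℕ × ℕ) :=
  (List.range 19).map (fun i => (i, i + 1, 40 + i)) ++
  (List.range 19).map (fun i => (20 + i, 21 + i, 40 + i))

/-- edges, as pairs of vertex numbers -/
def L : List (ℕ × ℕ) :=
  (List.range 19).map (fun i => (i, i + 1)) ++ (List.range 19).map (fun i => (i, 40 + i)) ++
  (List.range 19).map (fun i => (i + 1, 40 + i)) ++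
  (List.range 19).map (fun i => (20 + i, 21 + i)) ++
  (List.range 19).map (fun i => (20 + i, 40 + i)) ++
  (List.range 19).map (fun i => (21 + i, 40 + i))

def degN (v : ℕ) : ℕ := (L.filter (fun p => p.1 == v || p.2 == v)).length

def cj (v : ℕ) : ℕ := if v < 20 then v + 20 else if v < 40 then v - 20 else v

theorem L_nodup : L.Nodup := by decide +kernel
theorem T0_nodup : T0.Nodup := by decide +kernel
theorem L_lt : ∀ p ∈ L, p.1 < p.2 ∧ p.2 < 59 := by decide +kernel
theorem T0_lt : ∀ p ∈ T0, p.1 < p.2.1 ∧ p.2.1 < p.2.2 ∧ p.2.2 < 59 := by decide +kernel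
theorem T0_L : ∀ p ∈ T0, (p.1, p.2.1) ∈ L ∧ (p.1, p.2.2) ∈ L ∧ (p.2.1, p.2.2) ∈ L := by
  decide +kernel
theorem L_T0 : ∀ p ∈ L, ∃ t ∈ T0, (p.1 = t.1 ∨ p.1 = t.2.1 ∨ p.1 = t.2.2) ∧
    (p.2 = t.1 ∨ p.2 = t.2.1 ∨ p.2 = t.2.2) := by decide +kernel
/-- arithmetic test for membership in `L` -/
def A (a b : ℕ) : Bool :=
  (Nat.beq b (a + 1) && (Nat.blt a 19 || (Nat.ble 20 a && Nat.blt a 39))) ||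
  (Nat.ble 40 b && ((Nat.blt a 19 && Nat.beq b (a + 40)) ||
  (Nat.ble 1 a && Nat.ble a 19 && Nat.beq b (a + 39)) ||
  (Nat.ble 20 a && Nat.blt a 39 && Nat.beq b (a + 20)) ||
  (Nat.ble 21 a && Nat.ble a 39 && Nat.beq b (a + 19))))

theorem mem_A {a b : ℕ} (hp : (a, b) ∈ L) : A a b = true := by
  simp only [L, List.mem_append, List.mem_map, List.mem_range, Prod.mk.injEq] at hp
  simp only [A, Bool.or_eq_true, Bool.and_eq_true, Nat.beq_eq, Nat.blt_eq, Nat.ble_eq]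
  rcases hp with ((((⟨k, hk, rfl, rfl⟩ | ⟨k, hk, rfl, rfl⟩) | ⟨k, hk, rfl, rfl⟩) |
    ⟨k, hk, rfl, rfl⟩) | ⟨k, hk, rfl, rfl⟩) | ⟨k, hk, rfl, rfl⟩ <;> omega

theorem L_tri' : (L.all fun p => (List.range 59).all fun z =>
    !((A p.1 z || A z p.1) && (A p.2 z || A z p.2)) || T0.any fun t =>
      decide (({p.1, p.2, z} : Finset ℕ) = {t.1, t.2.1, t.2.2})) = true := by decide +kernel

theorem L_tri (p : ℕ × ℕ) (hp : p ∈ L) (z : ℕ) (hz : z < 59)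
    (h1 : (p.1, z) ∈ L ∨ (z, p.1) ∈ L) (h2 : (p.2, z) ∈ L ∨ (z, p.2) ∈ L) :
    ∃ t ∈ T0, ({p.1, p.2, z} : Finset ℕ) = {t.1, t.2.1, t.2.2} := by
  have h := List.all_eq_true.1 (List.all_eq_true.1 L_tri' p hp) z (List.mem_range.2 hz)
  have a1 : (A p.1 z || A z p.1) = true := by
    rcases h1 with h1 | h1 <;> simp [mem_A h1]
  have a2 : (A p.2 z || A z p.2) = true := by
    rcases h2 with h1 | h1 <;> simp [mem_A h1]
  rw [a1, a2, Bool.and_self, Bool.not_true, Bool.false_or] at h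
  obtain ⟨t, ht, e⟩ := List.any_eq_true.1 h
  exact ⟨t, ht, by simpa using e⟩

theorem deg24 : ∀ v < 59, degN v = 2 ∨ degN v = 4 := by decide +kernel
theorem deg2 : ∀ v < 59, degN v = 2 → v = 0 ∨ v = 19 ∨ v = 20 ∨ v = 39 := by decide +kernel
theorem deg_cj : ∀ v < 59, degN (cj v) = degN v ∧ cj v < 59 := by decide +kernel
theorem T0_len : T0.length = 38 := by decide +kernel

section
variable {C S r : ℝ}

theorem sgn (k : ℕ) : ((-1 : ℝ) ^ k = 1) ∨ ((-1 : ℝ) ^ k = -1) := neg_one_pow_eq_or ℝ k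

theorem ht_pos (h : Par C S r) (k : ℕ) : 0 < ht C S r k := by
  obtain ⟨hC, hS, hr, hCS, hr2, hlt⟩ := h
  have : 3 / 2 * S < r * C := by nlinarith
  unfold ht
  rcases sgn k with e | e <;> rw [e] <;> linarith

theorem Q_lo (h : Par C S r) (k : ℕ) : k * C < (Q C S r k).re := by
  obtain ⟨hC, hS, hr, hCS, hr2, hlt⟩ := h
  have := mul_pos hr hS
  simp only [Q]
  rcases sgn k with e | e <;> rw [e] <;> nlinarith

theorem Q_hi (h : Par C S r) (k : ℕ) : (Q C S r k).re < (k + 1) * C := by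
  obtain ⟨hC, hS, hr, hCS, hr2, hlt⟩ := h
  have := mul_pos hr hS
  simp only [Q]
  rcases sgn k with e | e <;> rw [e] <;> nlinarith

theorem P_inj (h : Par C S r) {ε δ : ℝ} {k l : ℕ} (e : P C S r ε k = P C S r δ l) :
    ε = δ ∧ k = l := by
  have h1 := congrArg Complex.re e
  have h2 := congrArg Complex.im e
  simp only [P] at h1 h2
  have : k = l := by exact_mod_cast mul_right_cancel₀ h.hC.ne' h1
  subst this
  exact ⟨mul_right_cancel₀ (ht_pos h k).ne' h2, rfl⟩

theorem Q_inj (h : Par C S r) {k l : ℕ} (e : Q C S r k = Q C S r l) : k = l := by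
  have h1 := congrArg Complex.re e
  have a1 := Q_lo h k
  have a2 := Q_hi h k
  have b1 := Q_lo h l
  have b2 := Q_hi h l
  have c1 : (k : ℝ) < l + 1 := lt_of_mul_lt_mul_right (by linarith) h.hC.le
  have c2 : (l : ℝ) < k + 1 := lt_of_mul_lt_mul_right (by linarith) h.hC.le
  have c1' : k < l + 1 := by exact_mod_cast c1
  have c2' : l < k + 1 := by exact_mod_cast c2
  omega

theorem P_ne_Q (h : Par C S r) {ε : ℝ} (hε : ε = 1 ∨ ε = -1) {k l : ℕ} :
    P C S r ε k ≠ Q C S r l := by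
  intro e
  have h2 := congrArg Complex.im e
  simp only [P, Q] at h2
  have := ht_pos h k
  rcases hε with rfl | rfl <;> linarith

theorem pos_inj (h : Par C S r) {v w : ℕ} (e : pos C S r v = pos C S r w) : v = w := by
  unfold pos at e
  split_ifs at e with h1 h2 h3 h4 h5 h6 h7 h8
  all_goals first
    | (have := P_inj h e; obtain ⟨a, b⟩ := this; first | omega | (norm_num at a))
    | exact absurd e (P_ne_Q h (by norm_num))
    | exact absurd e.symm (P_ne_Q h (by norm_num))
    | (have := Q_inj h e; omega)

theorem dist_PP (h : Par C S r) {ε : ℝ} (hε : ε = 1 ∨ ε = -1) (k : ℕ) :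
    dist (P C S r ε k) (P C S r ε (k + 1)) = 1 := by
  obtain ⟨hC, hS, hr, hCS, hr2, hlt⟩ := h
  rw [Complex.dist_eq_re_im, Real.sqrt_eq_one]
  simp only [P, ht, pow_succ]
  push_cast
  rcases hε with rfl | rfl <;> rcases sgn k with e | e <;> rw [e] <;> nlinarith

theorem dist_PQ (h : Par C S r) {ε : ℝ} (hε : ε = 1 ∨ ε = -1) (k : ℕ) :
    dist (P C S r ε k) (Q C S r k) = 1 := by
  obtain ⟨hC, hS, hr, hCS, hr2, hlt⟩ := h
  rw [Complex.dist_eq_re_im, Real.sqrt_eq_one]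
  simp only [P, Q, ht]
  rcases hε with rfl | rfl <;> rcases sgn k with e | e <;> rw [e] <;>
    linear_combination hCS * (1 / 4) + (C ^ 2 + S ^ 2) * hr2 + (3 / 4) * hCS

theorem dist_PQ' (h : Par C S r) {ε : ℝ} (hε : ε = 1 ∨ ε = -1) (k : ℕ) :
    dist (P C S r ε (k + 1)) (Q C S r k) = 1 := by
  obtain ⟨hC, hS, hr, hCS, hr2, hlt⟩ := h
  rw [Complex.dist_eq_re_im, Real.sqrt_eq_one]
  simp only [P, Q, ht, pow_succ]
  push_cast
  rcases hε with rfl | rfl <;> rcases sgn k with e | e <;> rw [e] <;>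
    linear_combination hCS * (1 / 4) + (C ^ 2 + S ^ 2) * hr2 + (3 / 4) * hCS

/-- geometric description of the edges -/
theorem edge_cases {p : ℕ × ℕ} (hp : p ∈ L) : ∃ ε : ℝ, (ε = 1 ∨ ε = -1) ∧ ∃ k : ℕ,
    (pos C S r p.1 = P C S r ε k ∧ pos C S r p.2 = P C S r ε (k + 1)) ∨
    (pos C S r p.1 = P C S r ε k ∧ pos C S r p.2 = Q C S r k) ∨
    (pos C S r p.1 = P C S r ε (k + 1) ∧ pos C S r p.2 = Q C S r k) := by
  simp only [L, List.mem_append, List.mem_map, List.mem_range] at hp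
  rcases hp with ((((⟨k, hk, rfl⟩ | ⟨k, hk, rfl⟩) | ⟨k, hk, rfl⟩) | ⟨k, hk, rfl⟩) | ⟨k, hk, rfl⟩) |
    ⟨k, hk, rfl⟩
  · refine ⟨1, Or.inl rfl, k, Or.inl ⟨?_, ?_⟩⟩
    · simp only [pos]; rw [if_pos (by omega)]
    · simp only [pos]; rw [if_pos (by omega)]
  · refine ⟨1, Or.inl rfl, k, Or.inr (Or.inl ⟨?_, ?_⟩)⟩
    · simp only [pos]; rw [if_pos (by omega)]
    · simp only [pos]; rw [if_neg (by omega), if_neg (by omega)]; congr 1; omega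
  · refine ⟨1, Or.inl rfl, k, Or.inr (Or.inr ⟨?_, ?_⟩)⟩
    · simp only [pos]; rw [if_pos (by omega)]
    · simp only [pos]; rw [if_neg (by omega), if_neg (by omega)]; congr 1; omega
  · refine ⟨-1, Or.inr rfl, k, Or.inl ⟨?_, ?_⟩⟩
    · simp only [pos]; rw [if_neg (by omega), if_pos (by omega)]; congr 1; omega
    · simp only [pos]; rw [if_neg (by omega), if_pos (by omega)]; congr 1; omega
  · refine ⟨-1, Or.inr rfl, k, Or.inr (Or.inl ⟨?_, ?_⟩)⟩
    · simp only [pos]; rw [if_neg (by omega), if_pos (by omega)]; congr 1; omega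
    · simp only [pos]; rw [if_neg (by omega), if_neg (by omega)]; congr 1; omega
  · refine ⟨-1, Or.inr rfl, k, Or.inr (Or.inr ⟨?_, ?_⟩)⟩
    · simp only [pos]; rw [if_neg (by omega), if_pos (by omega)]; congr 1; omega
    · simp only [pos]; rw [if_neg (by omega), if_neg (by omega)]; congr 1; omega

/-- the graph -/
def gr (h : Par C S r) : UnitDistGraph where
  V := (Finset.range 59).image (pos C S r)
  E := L.toFinset.image (fun p => {pos C S r p.1, pos C S r p.2})
  edge_sub := by
    intro e he
    obtain ⟨p, hp, rfl⟩ := Finset.mem_image.1 he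
    have := L_lt p (List.mem_toFinset.1 hp)
    intro x hx
    rcases Finset.mem_insert.1 hx with rfl | hx
    · exact Finset.mem_image_of_mem _ (Finset.mem_range.2 (by omega))
    · rw [Finset.mem_singleton.1 hx]
      exact Finset.mem_image_of_mem _ (Finset.mem_range.2 (by omega))
  edge_pair := by
    intro e he
    obtain ⟨p, hp, rfl⟩ := Finset.mem_image.1 he
    have hp := List.mem_toFinset.1 hp
    refine ⟨_, _, ?_, rfl, ?_⟩
    · intro e
      have := pos_inj h e
      have := L_lt p hp
      omega
    · obtain ⟨ε, hε, k, ⟨h1, h2⟩ | ⟨h1, h2⟩ | ⟨h1, h2⟩⟩ := edge_cases (C := C) (S := S) (r := r) hp <;>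
        rw [h1, h2]
      · exact dist_PP h hε k
      · exact dist_PQ h hε k
      · exact dist_PQ' h hε k

theorem mem_E (h : Par C S r) {e : Finset ℂ} :
    e ∈ (gr h).E ↔ ∃ p ∈ L, e = {pos C S r p.1, pos C S r p.2} := by
  simp only [gr, Finset.mem_image, List.mem_toFinset]
  constructor
  · rintro ⟨p, hp, rfl⟩; exact ⟨p, hp, rfl⟩
  · rintro ⟨p, hp, rfl⟩; exact ⟨p, hp, rfl⟩

theorem mem_V (h : Par C S r) {v : ℂ} : v ∈ (gr h).V ↔ ∃ n < 59, v = pos C S r n := by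
  simp only [gr, Finset.mem_image, Finset.mem_range]
  constructor
  · rintro ⟨p, hp, rfl⟩; exact ⟨p, hp, rfl⟩
  · rintro ⟨p, hp, rfl⟩; exact ⟨p, hp, rfl⟩

theorem pair_inj (h : Par C S r) {a b c d : ℕ}
    (e : ({pos C S r a, pos C S r b} : Finset ℂ) = {pos C S r c, pos C S r d}) :
    (a = c ∧ b = d) ∨ (a = d ∧ b = c) := by
  have e' := congrArg (fun s : Finset ℂ => (s : Set ℂ)) e
  simp only [Finset.coe_pair] at e'
  rcases Set.pair_eq_pair_iff.1 e' with ⟨h1, h2⟩ | ⟨h1, h2⟩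
  · exact Or.inl ⟨pos_inj h h1, pos_inj h h2⟩
  · exact Or.inr ⟨pos_inj h h1, pos_inj h h2⟩

theorem adj_iff (h : Par C S r) {a b : ℕ} :
    ({pos C S r a, pos C S r b} : Finset ℂ) ∈ (gr h).E ↔ ((a, b) ∈ L ∨ (b, a) ∈ L) := by
  rw [mem_E]
  constructor
  · rintro ⟨⟨c, d⟩, hp, e⟩
    rcases pair_inj h e with ⟨rfl, rfl⟩ | ⟨rfl, rfl⟩
    · exact Or.inl hp
    · exact Or.inr hp
  · rintro (hp | hp)
    · exact ⟨_, hp, rfl⟩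
    · exact ⟨_, hp, Finset.pair_comm _ _⟩

theorem degree_pos (h : Par C S r) (v : ℕ) : (gr h).degree (pos C S r v) = degN v := by
  have key : {e | e ∈ (gr h).E ∧ pos C S r v ∈ e} =
      (fun p : ℕ × ℕ => ({pos C S r p.1, pos C S r p.2} : Finset ℂ)) ''
        ((L.filter (fun p => p.1 == v || p.2 == v)).toFinset : Set (ℕ × ℕ)) := by
    ext e
    simp only [Set.mem_ofPred_eq, mem_E, Set.mem_image, List.coe_toFinset, List.mem_filter,
      Bool.or_eq_true, beq_iff_eq]
    constructor
    · rintro ⟨⟨p, hp, rfl⟩, hv⟩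
      refine ⟨p, ⟨hp, ?_⟩, rfl⟩
      rcases Finset.mem_insert.1 hv with hv | hv
      · exact Or.inl (pos_inj h hv).symm
      · exact Or.inr (pos_inj h (Finset.mem_singleton.1 hv)).symm
    · rintro ⟨p, ⟨hp, hv⟩, rfl⟩
      refine ⟨⟨p, hp, rfl⟩, ?_⟩
      rcases hv with hv | hv <;> simp [hv]
  unfold UnitDistGraph.degree
  rw [key, Set.InjOn.ncard_image, Set.ncard_coe_finset, List.toFinset_card_of_nodup]
  · rfl
  · exact L_nodup.filter _
  · intro p hp q hq e
    simp only [List.coe_toFinset, List.mem_filter, Set.mem_ofPred_eq] at hp hq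
    have h1 := L_lt p hp.1
    have h2 := L_lt q hq.1
    rcases pair_inj h e with ⟨a, b⟩ | ⟨a, b⟩
    · exact Prod.ext a b
    · omega

theorem isTri (h : Par C S r) {t : Finset ℂ} : (gr h).IsUnitTriangle t ↔
    ∃ p ∈ T0, t = {pos C S r p.1, pos C S r p.2.1, pos C S r p.2.2} := by
  constructor
  · rintro ⟨hV, hc, hE⟩
    obtain ⟨x, y, z, hxy, hxz, hyz, rfl⟩ := Finset.card_eq_three.1 hc
    obtain ⟨a, ha, rfl⟩ := (mem_V h).1 (hV (show x ∈ _ by simp))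
    obtain ⟨b, hb, rfl⟩ := (mem_V h).1 (hV (show y ∈ _ by simp))
    obtain ⟨c, hc', rfl⟩ := (mem_V h).1 (hV (show z ∈ _ by simp))
    have e1 := (adj_iff h).1 (hE _ (by simp) _ (by simp) hxy)
    have e2 := (adj_iff h).1 (hE _ (by simp) _ (by simp) hxz)
    have e3 := (adj_iff h).1 (hE _ (by simp) _ (by simp) hyz)
    have : ∃ t ∈ T0, ({a, b, c} : Finset ℕ) = {t.1, t.2.1, t.2.2} := by
      rcases e1 with e1 | e1
      · exact L_tri _ e1 c hc' e2 e3
      · obtain ⟨t, ht, e⟩ := L_tri _ e1 c hc' e3 e2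
        refine ⟨t, ht, ?_⟩
        rw [← e, Finset.insert_comm]
    obtain ⟨t, ht, e⟩ := this
    refine ⟨t, ht, ?_⟩
    have := congrArg (Finset.image (pos C S r)) e
    simpa only [Finset.image_insert, Finset.image_singleton] using this
  · rintro ⟨p, hp, rfl⟩
    obtain ⟨l1, l2, l3⟩ := T0_lt p hp
    obtain ⟨m1, m2, m3⟩ := T0_L p hp
    refine ⟨?_, ?_, ?_⟩
    · intro x hx
      simp only [Finset.mem_insert, Finset.mem_singleton] at hx
      rw [mem_V]
      rcases hx with rfl | rfl | rfl
      · exact ⟨_, by omega, rfl⟩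
      · exact ⟨_, by omega, rfl⟩
      · exact ⟨_, by omega, rfl⟩
    · refine Finset.card_eq_three.2 ⟨_, _, _, ?_, ?_, ?_, rfl⟩ <;> intro e <;>
        have := pos_inj h e <;> omega
    · intro x hx y hy hxy
      simp only [Finset.mem_insert, Finset.mem_singleton] at hx hy
      rcases hx with rfl | rfl | rfl <;> rcases hy with rfl | rfl | rfl <;>
        first
        | exact absurd rfl hxy
        | exact (adj_iff h).2 (by tauto)

theorem triCount (h : Par C S r) : (gr h).triangleCount = 38 := by
  have key : {t : Finset ℂ | (gr h).IsUnitTriangle t} =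
      (fun p : ℕ × ℕ × ℕ => ({pos C S r p.1, pos C S r p.2.1, pos C S r p.2.2} : Finset ℂ)) ''
        (T0.toFinset : Set (ℕ × ℕ × ℕ)) := by
    ext t
    simp only [Set.mem_ofPred_eq, isTri, Set.mem_image, List.coe_toFinset]
    constructor
    · rintro ⟨p, hp, rfl⟩; exact ⟨p, hp, rfl⟩
    · rintro ⟨p, hp, rfl⟩; exact ⟨p, hp, rfl⟩
  unfold UnitDistGraph.triangleCount
  rw [key, Set.InjOn.ncard_image, Set.ncard_coe_finset, List.toFinset_card_of_nodup T0_nodup, T0_len]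
  rintro ⟨a, b, c⟩ hp ⟨a', b', c'⟩ hq e
  simp only [List.coe_toFinset, Set.mem_ofPred_eq] at hp hq
  have h1 := T0_lt _ hp
  have h2 := T0_lt _ hq
  simp only at h1 h2 e
  have inj : Function.Injective (pos C S r) := fun _ _ => pos_inj h
  have e' : ({a, b, c} : Finset ℕ) = {a', b', c'} := by
    apply Finset.image_injective inj
    simpa only [Finset.image_insert, Finset.image_singleton] using e
  have m1 : a ∈ ({a', b', c'} : Finset ℕ) := e' ▸ (by simp)
  have m2 : b ∈ ({a', b', c'} : Finset ℕ) := e' ▸ (by simp)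
  have m3 : c ∈ ({a', b', c'} : Finset ℕ) := e' ▸ (by simp)
  simp only [Finset.mem_insert, Finset.mem_singleton] at m1 m2 m3
  have : a = a' ∧ b = b' ∧ c = c' := by omega
  obtain ⟨rfl, rfl, rfl⟩ := this
  rfl

theorem only (h : Par C S r) : (gr h).OnlyUnitTriangles := by
  intro e he
  obtain ⟨p, hp, rfl⟩ := (mem_E h).1 he
  obtain ⟨t, ht, h1, h2⟩ := L_T0 p hp
  refine ⟨_, (isTri h).2 ⟨t, ht, rfl⟩, ?_⟩
  intro x hx
  simp only [Finset.mem_insert, Finset.mem_singleton] at hx ⊢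
  rcases hx with rfl | rfl
  · rcases h1 with e | e | e <;> rw [e] <;> simp
  · rcases h2 with e | e | e <;> rw [e] <;> simp

theorem seg_pair (x y : ℂ) : edgeSeg {x, y} = segment ℝ x y := by
  unfold edgeSeg
  rw [Finset.coe_pair, convexHull_pair]

/-- location of the points of an edge in the slab of its triangle -/
def Good (C S r : ℝ) (ε : ℝ) (k : ℕ) (e : Finset ℂ) (p : ℂ) : Prop :=
  k * C ≤ p.re ∧ p.re ≤ (k + 1) * C ∧ 0 ≤ ε * p.im ∧
  (p.re = k * C → p = P C S r ε k ∧ p ∈ e) ∧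
  (p.re = (k + 1) * C → p = P C S r ε (k + 1) ∧ p ∈ e) ∧
  (p.im = 0 → p = Q C S r k ∧ p ∈ e)

theorem mem_seg {x y p : ℂ} (hp : p ∈ segment ℝ x y) : ∃ t : ℝ, 0 ≤ t ∧ t ≤ 1 ∧
    p.re = x.re + t * (y.re - x.re) ∧ p.im = x.im + t * (y.im - x.im) ∧
    (t = 0 → p = x) ∧ (t = 1 → p = y) ∧ p - x = t * (y - x) := by
  rw [segment_eq_image'] at hp
  obtain ⟨t, ⟨h0, h1⟩, rfl⟩ := hp
  refine ⟨t, h0, h1, ?_, ?_, ?_, ?_, ?_⟩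
  · simp
  · simp
  · rintro rfl; simp
  · rintro rfl; simp
  · simp

theorem good_aux {ε : ℝ} {k : ℕ} {x y p : ℂ} (hp : p ∈ segment ℝ x y)
    (hx : Good C S r ε k {x, y} x) (hy : Good C S r ε k {x, y} y)
    (h1 : x.re ≠ y.re) (h2 : 0 < ε * x.im) : Good C S r ε k {x, y} p := by
  obtain ⟨t, t0, t1, hre, him, e0, e1, -⟩ := mem_seg hp
  rcases eq_or_lt_of_le t0 with h | t0'
  · rw [e0 h.symm]; exact hx
  rcases eq_or_lt_of_le t1 with h | t1'
  · rw [e1 h]; exact hy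
  obtain ⟨x1, x2, x3, x4, x5, x6⟩ := hx
  obtain ⟨y1, y2, y3, y4, y5, y6⟩ := hy
  have s0 : 0 < 1 - t := by linarith
  refine ⟨by nlinarith, by nlinarith, ?_, ?_, ?_, ?_⟩
  · rw [him]; nlinarith
  · intro h
    exfalso
    rcases lt_or_gt_of_ne h1 with h1 | h1 <;> nlinarith
  · intro h
    exfalso
    rcases lt_or_gt_of_ne h1 with h1 | h1 <;> nlinarith
  · intro h
    exfalso
    have h' : (1 - t) * (ε * x.im) + t * (ε * y.im) = 0 := by
      rw [him] at h; linear_combination ε * h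
    have a1 := mul_nonneg s0.le x3
    have a2 := mul_nonneg t0 y3
    have b1 : ε * x.im = 0 := by
      have : (1 - t) * (ε * x.im) = 0 := by linarith
      exact (mul_eq_zero.1 this).resolve_left s0.ne'
    linarith

theorem eP_pos (h : Par C S r) {ε : ℝ} (hε : ε = 1 ∨ ε = -1) (k : ℕ) :
    0 < ε * (P C S r ε k).im := by
  have := ht_pos h k
  simp only [P]
  rcases hε with rfl | rfl <;> linarith

theorem good_P (h : Par C S r) {ε : ℝ} (hε : ε = 1 ∨ ε = -1) (k : ℕ) {e : Finset ℂ}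
    (he : P C S r ε k ∈ e) : Good C S r ε k e (P C S r ε k) := by
  have h1 := eP_pos h hε k
  have hC := h.hC
  refine ⟨le_of_eq rfl, ?_, h1.le, fun _ => ⟨rfl, he⟩, ?_, ?_⟩
  · simp only [P]; nlinarith
  · intro h2
    simp only [P] at h2
    exfalso; nlinarith
  · intro h2
    rw [h2] at h1; simp at h1

theorem good_P' (h : Par C S r) {ε : ℝ} (hε : ε = 1 ∨ ε = -1) (k : ℕ) {e : Finset ℂ}
    (he : P C S r ε (k + 1) ∈ e) : Good C S r ε k e (P C S r ε (k + 1)) := by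
  have h1 := eP_pos h hε (k + 1)
  have hC := h.hC
  refine ⟨?_, ?_, h1.le, ?_, fun _ => ⟨rfl, he⟩, ?_⟩
  · simp only [P]; push_cast; nlinarith
  · simp only [P]; push_cast; nlinarith
  · intro h2
    simp only [P] at h2
    push_cast at h2
    exfalso; nlinarith
  · intro h2
    rw [h2] at h1; simp at h1

theorem good_Q (h : Par C S r) (ε : ℝ) (k : ℕ) {e : Finset ℂ}
    (he : Q C S r k ∈ e) : Good C S r ε k e (Q C S r k) := by
  have h1 := Q_lo h k
  have h2 := Q_hi h k
  refine ⟨h1.le, h2.le, ?_, fun h3 => ?_, fun h3 => ?_, fun _ => ⟨rfl, he⟩⟩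
  · simp [Q]
  · exact absurd h3 h1.ne'
  · exact absurd h3 h2.ne

/-- sides at a common endpoint meet only there -/
theorem seg_share {v x y p : ℂ} (hx : dist v x = 1) (hy : dist v y = 1) (hxy : x ≠ y)
    (h1 : p ∈ segment ℝ v x) (h2 : p ∈ segment ℝ v y) : p = v := by
  obtain ⟨t, t0, -, -, -, et, -, e1⟩ := mem_seg h1
  obtain ⟨s, s0, -, -, -, -, -, e2⟩ := mem_seg h2
  have n1 : ‖p - v‖ = t := by
    rw [e1, norm_mul, ← dist_eq_norm, dist_comm, hx, mul_one, Complex.norm_real, Real.norm_of_nonneg t0]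
  have n2 : ‖p - v‖ = s := by
    rw [e2, norm_mul, ← dist_eq_norm, dist_comm, hy, mul_one, Complex.norm_real, Real.norm_of_nonneg s0]
  have hts : t = s := n1.symm.trans n2
  subst hts
  by_cases ht : t = 0
  · exact et ht
  · exfalso
    rw [e1] at e2
    have := mul_left_cancel₀ (Complex.ofReal_ne_zero.2 ht) e2
    exact hxy (sub_left_injective this)

/-- the three possible shapes of an edge of the triangle `(ε, k)` -/
def Shape (C S r : ℝ) (ε : ℝ) (k : ℕ) (e : Finset ℂ) : Prop :=
  e = {P C S r ε k, P C S r ε (k + 1)} ∨ e = {P C S r ε k, Q C S r k} ∨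
    e = {P C S r ε (k + 1), Q C S r k}

theorem shape (h : Par C S r) {e : Finset ℂ} (he : e ∈ (gr h).E) :
    ∃ ε : ℝ, (ε = 1 ∨ ε = -1) ∧ ∃ k : ℕ, Shape C S r ε k e := by
  obtain ⟨p, hp, rfl⟩ := (mem_E h).1 he
  obtain ⟨ε, hε, k, ⟨h1, h2⟩ | ⟨h1, h2⟩ | ⟨h1, h2⟩⟩ := edge_cases (C := C) (S := S) (r := r) hp <;>
    refine ⟨ε, hε, k, ?_⟩ <;> rw [h1, h2] <;> simp [Shape]

theorem shape_good (h : Par C S r) {ε : ℝ} (hε : ε = 1 ∨ ε = -1) {k : ℕ} {e : Finset ℂ}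
    (he : Shape C S r ε k e) {p : ℂ} (hp : p ∈ edgeSeg e) : Good C S r ε k e p := by
  have hC := h.hC
  rcases he with rfl | rfl | rfl <;> rw [seg_pair] at hp
  · refine good_aux hp (good_P h hε k (by simp)) (good_P' h hε k (by simp)) ?_ (eP_pos h hε k)
    simp only [P]; push_cast; intro h; nlinarith
  · refine good_aux hp (good_P h hε k (by simp)) (good_Q h ε k (by simp)) ?_ (eP_pos h hε k)
    exact (Q_lo h k).ne
  · refine good_aux hp (good_P' h hε k (by simp)) (good_Q h ε k (by simp)) ?_ (eP_pos h hε _)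
    have := (Q_hi h k).ne'
    simpa only [P, Nat.cast_add, Nat.cast_one] using this

theorem shape_same (h : Par C S r) {ε : ℝ} (hε : ε = 1 ∨ ε = -1) {k : ℕ} {e f : Finset ℂ}
    (he : Shape C S r ε k e) (hf : Shape C S r ε k f) (hef : e ≠ f) {p : ℂ}
    (hp : p ∈ edgeSeg e) (hp' : p ∈ edgeSeg f) : p ∈ e ∧ p ∈ f := by
  have d1 := dist_PP h hε k
  have d2 := dist_PQ h hε k
  have d3 := dist_PQ' h hε k
  have n1 : P C S r ε k ≠ P C S r ε (k + 1) := by intro e; rw [e, dist_self] at d1; norm_num at d1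
  have n2 : P C S r ε k ≠ Q C S r k := P_ne_Q h hε
  have n3 : P C S r ε (k + 1) ≠ Q C S r k := P_ne_Q h hε
  rcases he with rfl | rfl | rfl <;> rcases hf with rfl | rfl | rfl <;>
    first
    | exact absurd rfl hef
    | skip
  all_goals rw [seg_pair] at hp hp'
  · have := seg_share d1 d2 n3 hp hp'
    subst this; simp
  · rw [segment_symm] at hp
    have := seg_share (by rwa [dist_comm]) d3 n2 hp hp'
    subst this; simp
  · have := seg_share d2 d1 n3.symm hp hp'
    subst this; simp
  · rw [segment_symm] at hp hp'
    have := seg_share (by rwa [dist_comm]) (by rwa [dist_comm]) n1 hp hp'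
    subst this; simp
  · rw [segment_symm] at hp'
    have := seg_share d3 (by rwa [dist_comm]) n2.symm hp hp'
    subst this; simp
  · rw [segment_symm] at hp hp'
    have := seg_share (by rwa [dist_comm]) (by rwa [dist_comm]) n1.symm hp hp'
    subst this; simp

theorem cross_lt (h : Par C S r) {ε : ℝ} {k l : ℕ} {e f : Finset ℂ} {p : ℂ} (hkl : k < l)
    (he : Good C S r ε k e p) (hf : Good C S r ε l f p) : p ∈ e ∧ p ∈ f := by
  have h1 := he.2.1
  have h2 := hf.1
  have h3 : ((k : ℝ) + 1) ≤ l := by exact_mod_cast hkl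
  have h4 := mul_le_mul_of_nonneg_right h3 h.hC.le
  exact ⟨(he.2.2.2.2.1 (by linarith)).2, (hf.2.2.2.1 (by linarith)).2⟩

theorem planar1 (h : Par C S r) {e f : Finset ℂ} (he : e ∈ (gr h).E) (hf : f ∈ (gr h).E)
    (hef : e ≠ f) {p : ℂ} (hp : p ∈ edgeSeg e) (hp' : p ∈ edgeSeg f) : p ∈ e ∧ p ∈ f := by
  obtain ⟨ε, hε, k, se⟩ := shape h he
  obtain ⟨δ, hδ, l, sf⟩ := shape h hf
  have ge := shape_good h hε se hp
  have gf := shape_good h hδ sf hp'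
  by_cases hεδ : ε = δ
  · subst hεδ
    rcases lt_trichotomy k l with hkl | rfl | hkl
    · exact cross_lt h hkl ge gf
    · exact shape_same h hε se sf hef hp hp'
    · exact (cross_lt h hkl gf ge).symm
  · have h1 := ge.2.2.1
    have h2 := gf.2.2.1
    have : p.im = 0 := by
      rcases hε with rfl | rfl <;> rcases hδ with rfl | rfl <;>
        first
        | exact absurd rfl hεδ
        | linarith
    exact ⟨(ge.2.2.2.2.2 this).2, (gf.2.2.2.2.2 this).2⟩

theorem vert_on (h : Par C S r) {v : ℂ} (hv : v ∈ (gr h).V) {e : Finset ℂ} (he : e ∈ (gr h).E)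
    (hve : v ∈ edgeSeg e) : v ∈ e := by
  obtain ⟨n, hn, rfl⟩ := (mem_V h).1 hv
  by_contra hcon
  have hd := degree_pos h n
  have h0 : 0 < (gr h).degree (pos C S r n) := by
    rcases deg24 n hn with h2 | h2 <;> omega
  obtain ⟨f, hf, hnf⟩ := (Set.ncard_pos (Set.finite_of_ncard_pos h0)).1 h0
  have hne : e ≠ f := by rintro rfl; exact hcon hnf
  exact hcon (planar1 h he hf hne hve (subset_convexHull ℝ _ hnf)).1

theorem planar (h : Par C S r) : (gr h).Planar :=
  ⟨fun _ he _ hf hef _ hp => planar1 h he hf hef hp.1 hp.2, fun _ hv _ he hve => vert_on h hv he hve⟩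

theorem ht_succ_succ (k : ℕ) : ht C S r (k + 2) = ht C S r k := by
  unfold ht; rw [pow_add]; norm_num

/-- neighbours of a vertex -/
theorem nbr (h : Par C S r) {v a : ℂ} (he : {v, a} ∈ (gr h).E) :
    (∃ ε : ℝ, (ε = 1 ∨ ε = -1) ∧ ∃ k, v = P C S r ε k ∧ (a.im = ε * ht C S r (k + 1) ∨ a.im = 0)) ∨
    (∃ k, v = Q C S r k ∧ ∃ ε : ℝ, (ε = 1 ∨ ε = -1) ∧ (a = P C S r ε k ∨ a = P C S r ε (k + 1))) := by
  obtain ⟨ε, hε, k, hs⟩ := shape h he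
  have pe : ∀ {x y : ℂ}, ({v, a} : Finset ℂ) = {x, y} → (v = x ∧ a = y) ∨ (v = y ∧ a = x) := by
    intro x y e
    have e' := congrArg (fun s : Finset ℂ => (s : Set ℂ)) e
    simp only [Finset.coe_pair] at e'
    exact Set.pair_eq_pair_iff.1 e'
  rcases hs with hs | hs | hs <;> rcases pe hs with ⟨rfl, rfl⟩ | ⟨rfl, rfl⟩
  · exact Or.inl ⟨ε, hε, k, rfl, Or.inl rfl⟩
  · exact Or.inl ⟨ε, hε, k + 1, rfl, Or.inl (by rw [ht_succ_succ]; rfl)⟩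
  · exact Or.inl ⟨ε, hε, k, rfl, Or.inr rfl⟩
  · exact Or.inr ⟨k, rfl, ε, hε, Or.inl rfl⟩
  · exact Or.inl ⟨ε, hε, k + 1, rfl, Or.inr rfl⟩
  · exact Or.inr ⟨k, rfl, ε, hε, Or.inr rfl⟩

theorem no_straight (h : Par C S r) {v a b : ℂ} (ha : {v, a} ∈ (gr h).E) (hb : {v, b} ∈ (gr h).E) :
    a + b ≠ 2 * v := by
  intro e
  have hre := congrArg Complex.re e
  have him := congrArg Complex.im e
  simp only [Complex.add_re, Complex.add_im, Complex.mul_re, Complex.mul_im, Complex.re_ofNat,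
    Complex.im_ofNat] at hre him
  have h32 : 3 / 2 * S < r * C := by
    obtain ⟨hC, hS, hr, hCS, hr2, hlt⟩ := h
    nlinarith
  have hS := h.hS
  have hC := h.hC
  rcases nbr h ha with ⟨ε, hε, k, rfl, h1⟩ | ⟨k, rfl, ε, hε, h1⟩
  · rcases nbr h hb with ⟨δ, hδ, l, e2, h2⟩ | ⟨l, e2, _⟩
    · obtain ⟨rfl, rfl⟩ := P_inj h e2
      simp only [P, ht, pow_succ] at him h1 h2
      rcases sgn k with hk | hk <;> rw [hk] at him h1 h2 <;>
        rcases hε with rfl | rfl <;> rcases h1 with h1 | h1 <;> rcases h2 with h2 | h2 <;>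
        rw [h1, h2] at him <;> linarith
    · exact P_ne_Q h hε e2
  · rcases nbr h hb with ⟨δ, hδ, l, e2, h2⟩ | ⟨l, e2, δ, hδ, h2⟩
    · exact P_ne_Q h hδ e2.symm
    · obtain rfl := Q_inj h e2
      have q1 := Q_lo h k
      have q2 := Q_hi h k
      have hp := ht_pos h k
      have hp' := ht_pos h (k + 1)
      have hne : ht C S r k ≠ ht C S r (k + 1) := by
        simp only [ht, pow_succ]
        intro h; rcases sgn k with hk | hk <;> rw [hk] at h <;> linarith
      have hq : (Q C S r k).im = 0 := rfl
      rw [hq] at him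
      rcases h1 with rfl | rfl <;> rcases h2 with rfl | rfl <;>
        simp only [P] at hre him <;> push_cast at hre <;>
        rcases hε with rfl | rfl <;> rcases hδ with rfl | rfl <;>
        first
        | linarith
        | exact hne (by linarith)

theorem covered (h : Par C S r) {x y : ℂ} (hx : x ∈ (gr h).V) (hxy : x ≠ y)
    (hc : (gr h).SideCovered x y) : dist x y = 1 := by
  obtain ⟨s, hs, hcov⟩ := hc
  have hsub : ∀ e ∈ s, edgeSeg e ⊆ segment ℝ x y := by
    intro e he
    rw [hcov]
    exact Set.subset_biUnion_of_mem (u := fun e => edgeSeg e) he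
  -- an edge of `s` at a vertex `w`
  have other : ∀ w ∈ (gr h).V, ∀ e ∈ s, w ∈ edgeSeg e → ∃ z, z ∈ (gr h).V ∧ e = {w, z} ∧ dist w z = 1 := by
    intro w hw e he hwe
    have hm := vert_on h hw (hs he) hwe
    obtain ⟨a, b, hab, rfl, hd⟩ := (gr h).edge_pair e (hs he)
    have hV := (gr h).edge_sub _ (hs he)
    rcases Finset.mem_insert.1 hm with rfl | hm
    · exact ⟨b, hV (by simp), rfl, hd⟩
    · rw [Finset.mem_singleton] at hm
      subst hm
      exact ⟨a, hV (by simp), Finset.pair_comm _ _, by rwa [dist_comm]⟩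
  have hx0 : x ∈ ⋃ e ∈ s, edgeSeg e := hcov ▸ left_mem_segment ℝ x y
  obtain ⟨e, he, hxe⟩ := Set.mem_iUnion₂.1 hx0
  obtain ⟨z, hz, rfl, hd⟩ := other x hx e he hxe
  by_cases hzy : z = y
  · rw [← hzy]; exact hd
  exfalso
  have hzs : z ∈ segment ℝ x y := hsub _ he (by rw [seg_pair]; exact right_mem_segment ℝ x z)
  obtain ⟨t, t0, t1, -, -, -, et1, et⟩ := mem_seg hzs
  have t1' : t < 1 := lt_of_le_of_ne t1 (fun h => hzy (et1 h))
  have hyx : y - x ≠ 0 := sub_ne_zero.2 hxy.symm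
  have hnorm : 0 < ‖y - x‖ := norm_pos_iff.2 hyx
  have htl : t * ‖y - x‖ = 1 := by
    have : ‖z - x‖ = 1 := by rw [← dist_eq_norm, dist_comm]; exact hd
    rw [et, norm_mul, Complex.norm_real, Real.norm_of_nonneg t0] at this
    exact this
  -- edges of `s` avoiding `z` stay away from it
  have hK : IsClosed (⋃ f ∈ s.filter (fun f => z ∉ edgeSeg f), edgeSeg f) := by
    refine Set.Finite.isClosed_biUnion (Finset.finite_toSet _) ?_
    intro f _
    exact (Set.Finite.isCompact_convexHull ℝ (Finset.finite_toSet f)).isClosed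
  have hzK : z ∈ (⋃ f ∈ s.filter (fun f => z ∉ edgeSeg f), edgeSeg f)ᶜ := by
    intro hm
    obtain ⟨f, hf, hzf⟩ := Set.mem_iUnion₂.1 hm
    exact (Finset.mem_filter.1 hf).2 hzf
  obtain ⟨η, hη, hball⟩ := Metric.isOpen_iff.1 hK.isOpen_compl z hzK
  obtain ⟨u, hu0, hu1, hu2⟩ : ∃ u : ℝ, 0 < u ∧ u ≤ 1 - t ∧ u * ‖y - x‖ < η := by
    refine ⟨min (1 - t) (η / (2 * ‖y - x‖)), lt_min (by linarith) (by positivity), min_le_left _ _, ?_⟩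
    calc _ ≤ η / (2 * ‖y - x‖) * ‖y - x‖ := by gcongr; exact min_le_right _ _
      _ = η / 2 := by field_simp
      _ < η := by linarith
  set p : ℂ := x + ((t + u : ℝ) : ℂ) * (y - x) with hp
  have hpz : p - z = (u : ℂ) * (y - x) := by
    rw [hp]; push_cast; linear_combination -et
  have hps : p ∈ segment ℝ x y := by
    rw [segment_eq_image']
    exact ⟨t + u, ⟨by linarith, by linarith⟩, by simp [hp]⟩
  rw [hcov] at hps
  obtain ⟨f, hf, hpf⟩ := Set.mem_iUnion₂.1 hps
  have hzf : z ∈ edgeSeg f := by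
    by_contra hzf
    refine hball (show p ∈ Metric.ball z η from ?_)
      (Set.mem_iUnion₂.2 ⟨f, Finset.mem_filter.2 ⟨hf, hzf⟩, hpf⟩)
    rw [Metric.mem_ball, dist_eq_norm, hpz, norm_mul, Complex.norm_real, Real.norm_of_nonneg hu0.le]
    exact hu2
  obtain ⟨w, hw, rfl, hdw⟩ := other z hz f hf hzf
  rw [seg_pair] at hpf
  obtain ⟨q, q0, q1, -, -, -, -, eq⟩ := mem_seg hpf
  have hq : q = u * ‖y - x‖ := by
    have h1 : ‖p - z‖ = u * ‖y - x‖ := by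
      rw [hpz, norm_mul, Complex.norm_real, Real.norm_of_nonneg hu0.le]
    have h2 : ‖p - z‖ = q := by
      rw [eq, norm_mul, ← dist_eq_norm, dist_comm, hdw, mul_one, Complex.norm_real,
        Real.norm_of_nonneg q0]
    linarith
  have hqt : q * t = u := by rw [hq, mul_assoc, mul_comm _ t, htl, mul_one]
  have hq0 : q ≠ 0 := by rintro rfl; simp at hqt; exact hu0.ne hqt
  have hfin : w - z = z - x := by
    have h1 : (q : ℂ) * (w - z) = (q : ℂ) * (z - x) := by
      rw [← eq, hpz, et, ← hqt]; push_cast; ring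
    exact mul_left_cancel₀ (Complex.ofReal_ne_zero.2 hq0) h1
  refine no_straight h (v := z) (a := x) (b := w) ?_ (hs hf) (by linear_combination hfin)
  rw [Finset.pair_comm]; exact hs he

theorem noAdd (h : Par C S r) : (gr h).NoAdditionalTriangles := by
  intro x hx y _ z _ hxy _ _ _ _ hc _ _
  exact covered h hx hxy hc

theorem pos_cj {v : ℕ} (hv : v < 59) : pos C S r (cj v) = (starRingEnd ℂ) (pos C S r v) := by
  unfold cj
  split_ifs with h1 h2
  · simp only [pos]
    rw [if_neg (by omega), if_pos (by omega), if_pos h1, Nat.add_sub_cancel]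
    apply Complex.ext <;> simp [P]
  · simp only [pos]
    rw [if_pos (by omega), if_neg h1, if_pos h2]
    apply Complex.ext <;> simp [P]
  · simp only [pos]
    rw [if_neg h1, if_neg h2]
    apply Complex.ext <;> simp [Q]

end

/-- the line directions -/
theorem exp_conj (b : ℝ) : (starRingEnd ℂ) (Complex.exp (b * Complex.I)) = Complex.exp (-(b * Complex.I)) := by
  rw [← Complex.exp_conj]; simp

open Real in
theorem params : ∃ C S r : ℝ, Par C S r ∧ S * cos (π / 169) = 19 * C * sin (π / 169) := by
  set b : ℝ := π / 169 with hb
  have hb0 : 0 < b := by positivity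
  have hb1 : b < 1 / 50 := by
    have := pi_lt_d2
    rw [hb]; linarith
  have hcos : 9 / 10 < cos b := by
    have := one_sub_sq_div_two_le_cos (x := b)
    nlinarith
  have hsin : sin b < 1 / 50 := (sin_lt hb0).trans hb1
  have hsin0 : 0 < sin b := sin_pos_of_pos_of_lt_pi hb0 (by have := pi_gt_three; linarith)
  set m : ℝ := 19 * (sin b / cos b) with hm
  have hm0 : 0 < m := by positivity
  have hm1 : m < 1 / 2 := by
    have : sin b / cos b < 1 / 45 := by rw [div_lt_iff₀ (by linarith)]; linarith
    rw [hm]; linarith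
  have hq : 0 < √(1 + m ^ 2) := by positivity
  have hq2 : √(1 + m ^ 2) ^ 2 = 1 + m ^ 2 := sq_sqrt (by positivity)
  have h3 : √3 ^ 2 = 3 := sq_sqrt (by norm_num)
  have h30 : 0 < √3 := by positivity
  have h32 : √3 < 2 := by nlinarith
  refine ⟨1 / √(1 + m ^ 2), m / √(1 + m ^ 2), √3 / 2, ⟨by positivity, by positivity, by positivity, ?_, ?_, ?_⟩, ?_⟩
  · rw [div_pow, div_pow, hq2]; field_simp
  · rw [div_pow, h3]; norm_num
  · rw [← mul_div_assoc, div_lt_div_iff_of_pos_right hq]; nlinarith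
  · have : m * cos b = 19 * sin b := by rw [hm]; field_simp
    rw [div_mul_eq_mul_div, this]; ring

end G2

open Real in
/-- There exists a finite planar straight-line unit-distance
graph with exactly 38 unit triangles, in which every edge lies in a unit
triangle, with no additional triangles, all vertex degrees equal to 2 or 4,
and two distinct lines `g₁`, `g₂` through a common point `c`, meeting at the
angle `2π/169` (the rotation about `c` by `2π/169` maps `g₁` onto `g₂`), such
that every degree-2 vertex lies on `g₁ ∪ g₂` and this rotation maps the set of
degree-2 vertices on `g₁` bijectively onto the set of degree-2 vertices on
`g₂`. -/
theorem exists_planar_subgraph_G2 :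
    ∃ G : UnitDistGraph, ∃ c d₁ d₂ : ℂ, d₁ ≠ 0 ∧ d₂ ≠ 0 ∧
      UnitDistGraph.line c d₁ ≠ UnitDistGraph.line c d₂ ∧
      G.Planar ∧ G.OnlyUnitTriangles ∧ G.NoAdditionalTriangles ∧
      G.triangleCount = 38 ∧
      (∀ v ∈ G.V, G.degree v = 2 ∨ G.degree v = 4) ∧
      (UnitDistGraph.rot c (2 * π / 169)) '' UnitDistGraph.line c d₁ =
        UnitDistGraph.line c d₂ ∧
      (∀ v ∈ G.V, G.degree v = 2 →
        v ∈ UnitDistGraph.line c d₁ ∪ UnitDistGraph.line c d₂) ∧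
      (UnitDistGraph.rot c (2 * π / 169)) ''
          {v : ℂ | v ∈ G.V ∧ G.degree v = 2 ∧ v ∈ UnitDistGraph.line c d₁} =
        {v : ℂ | v ∈ G.V ∧ G.degree v = 2 ∧ v ∈ UnitDistGraph.line c d₂} := by
  obtain ⟨C, S, r, h, hpar⟩ := G2.params
  set b : ℝ := π / 169 with hb
  have hb0 : 0 < b := by positivity
  have hbpi : b < π := by rw [hb]; have := pi_pos; linarith
  have hsin : 0 < Real.sin b := sin_pos_of_pos_of_lt_pi hb0 hbpi
  have hcos : 0 < Real.cos b := cos_pos_of_mem_Ioo ⟨by linarith, by rw [hb]; have := pi_pos; linarith⟩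
  set x0 : ℝ := - (G2.ht C S r 0 * Real.cos b / Real.sin b) with hx0
  set d : ℂ := Complex.exp (b * Complex.I) with hd
  have hdre : d.re = Real.cos b := Complex.exp_ofReal_mul_I_re b
  have hdim : d.im = Real.sin b := Complex.exp_ofReal_mul_I_im b
  have hdc : (starRingEnd ℂ) d = Complex.exp (-(b * Complex.I)) := G2.exp_conj b
  have hd0 : d ≠ 0 := Complex.exp_ne_zero _
  have hrd : ∀ z : ℂ, UnitDistGraph.rot (x0 : ℂ) (2 * π / 169) z = x0 + d * d * (z - x0) := by
    intro z
    unfold UnitDistGraph.rot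
    rw [hd, ← Complex.exp_add]
    congr 3
    rw [hb]; push_cast; ring
  have hdd : d * (starRingEnd ℂ) d = 1 := by
    rw [hdc, hd, ← Complex.exp_add, add_neg_cancel, Complex.exp_zero]
  -- the rotation acts on the first line as conjugation
  have hrot : ∀ t : ℝ, UnitDistGraph.rot (x0 : ℂ) (2 * π / 169) (x0 + t * (starRingEnd ℂ) d) =
      x0 + t * d := by
    intro t
    rw [hrd]
    linear_combination (t : ℂ) * d * hdd
  have hconj : ∀ t : ℝ, (starRingEnd ℂ) ((x0 : ℂ) + t * (starRingEnd ℂ) d) = x0 + t * d := by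
    intro t; simp
  have hconj' : ∀ t : ℝ, (starRingEnd ℂ) ((x0 : ℂ) + t * d) = x0 + t * (starRingEnd ℂ) d := by
    intro t; simp
  have hVc : ∀ v ∈ (G2.gr h).V, (starRingEnd ℂ) v ∈ (G2.gr h).V ∧
      (G2.gr h).degree ((starRingEnd ℂ) v) = (G2.gr h).degree v := by
    intro v hv
    obtain ⟨n, hn, rfl⟩ := (G2.mem_V h).1 hv
    obtain ⟨h1, h2⟩ := G2.deg_cj n hn
    rw [← G2.pos_cj hn, G2.degree_pos, G2.degree_pos]
    exact ⟨(G2.mem_V h).2 ⟨_, h2, rfl⟩, h1⟩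
  have hP0 : G2.P C S r 1 0 = x0 + ((G2.ht C S r 0 / Real.sin b : ℝ) : ℂ) * d := by
    apply Complex.ext
    · rw [Complex.add_re, Complex.re_ofReal_mul, Complex.ofReal_re, hdre, hx0]
      simp only [G2.P]; push_cast; ring
    · rw [Complex.add_im, Complex.im_ofReal_mul, Complex.ofReal_im, hdim]
      simp only [G2.P]; field_simp; ring
  have hP19 : G2.P C S r 1 19 = x0 + ((G2.ht C S r 19 / Real.sin b : ℝ) : ℂ) * d := by
    apply Complex.ext
    · rw [Complex.add_re, Complex.re_ofReal_mul, Complex.ofReal_re, hdre, hx0]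
      simp only [G2.P, G2.ht]; push_cast; field_simp; linear_combination -2 * hpar
    · rw [Complex.add_im, Complex.im_ofReal_mul, Complex.ofReal_im, hdim]
      simp only [G2.P]; field_simp; ring
  have p0 : G2.pos C S r 0 = G2.P C S r 1 0 := by simp [G2.pos]
  have p19 : G2.pos C S r 19 = G2.P C S r 1 19 := by simp [G2.pos]
  have p20 : G2.pos C S r 20 = (starRingEnd ℂ) (G2.P C S r 1 0) := by
    rw [← p0, ← G2.pos_cj (by norm_num)]; rfl
  have p39 : G2.pos C S r 39 = (starRingEnd ℂ) (G2.P C S r 1 19) := by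
    rw [← p19, ← G2.pos_cj (by norm_num)]; rfl
  refine ⟨G2.gr h, x0, (starRingEnd ℂ) d, d, ?_, hd0, ?_, G2.planar h, G2.only h, G2.noAdd h,
    G2.triCount h, ?_, ?_, ?_, ?_⟩
  · simpa using hd0
  · intro e
    have : (x0 : ℂ) + ((1 : ℝ) : ℂ) * d ∈ UnitDistGraph.line x0 ((starRingEnd ℂ) d) := by
      rw [e]; exact ⟨1, rfl⟩
    obtain ⟨t, ht⟩ := this
    have h1 := congrArg Complex.re ht
    have h2 := congrArg Complex.im ht
    simp [hdre, hdim] at h1 h2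
    have : t = 1 := by
      have : (t - 1) * Real.cos b = 0 := by linarith
      rcases mul_eq_zero.1 this with h | h
      · linarith
      · linarith
    subst this
    linarith
  · intro v hv
    obtain ⟨n, hn, rfl⟩ := (G2.mem_V h).1 hv
    rw [G2.degree_pos]
    exact G2.deg24 n hn
  · ext z
    constructor
    · rintro ⟨_, ⟨t, rfl⟩, rfl⟩
      exact ⟨t, hrot t⟩
    · rintro ⟨t, rfl⟩
      exact ⟨_, ⟨t, rfl⟩, hrot t⟩
  · intro v hv hdeg
    obtain ⟨n, hn, rfl⟩ := (G2.mem_V h).1 hv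
    rw [G2.degree_pos] at hdeg
    rcases G2.deg2 n hn hdeg with rfl | rfl | rfl | rfl
    · exact Or.inr ⟨_, p0.trans hP0⟩
    · exact Or.inr ⟨_, p19.trans hP19⟩
    · exact Or.inl ⟨_, by rw [p20, hP0, hconj']⟩
    · exact Or.inl ⟨_, by rw [p39, hP19, hconj']⟩
  · ext z
    constructor
    · rintro ⟨_, ⟨hv, hdeg, t, rfl⟩, rfl⟩
      obtain ⟨h1, h2⟩ := hVc _ hv
      rw [hconj] at h1 h2
      rw [hrot]
      exact ⟨h1, h2.trans hdeg, t, rfl⟩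
    · rintro ⟨hv, hdeg, t, rfl⟩
      obtain ⟨h1, h2⟩ := hVc _ hv
      rw [hconj'] at h1 h2
      exact ⟨_, ⟨h1, h2.trans hdeg, t, rfl⟩, hrot t⟩
end
end

section
/- There exists a finite 4-regular straight-line unit-distance graph in the Euclidean plane, built from exactly 3800 = 100·38 unit triangles whose interiors are pairwise disjoint (non-overlapping, vertex-to-vertex unit triangles), such that every edge is contained in a unit triangle, there are no additional triangles, and the graph is invariant under rotation by 2π/100 about some center (a rigid ring graph with rotational symmetry of order 100). This graph need not be planar: a vertex may lie in the relative interior of an edge. -/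
/-!
Straight-line unit-distance graphs in the Euclidean plane, modelled as ℂ.
-/

noncomputable section
open scoped Classical

open UnitDistGraph

namespace RingGraph
open Real

/-- The angle parameters of the construction: `a`, `b` are the tilts of the edges of
the wedge ladder, `t` the tilt of the edges of the rectangular ladder. -/
structure Par where
  a : ℝ
  b : ℝ
  t : ℝ
  ha : 0 < a
  hab : b = a + 2 * (π / 100)
  hbt : b < t
  ht : t < π / 6
  h1 : 5 * sin a = 4 * sin b
  h2 : 10 * cos t = 5 * cos a + 4 * cos b

theorem par_alg (S C s c x : ℝ) (hS0 : 0 < S) (hS1 : S < 0.0316) (hC0 : 0 < C)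
    (hSC : S ^ 2 + C ^ 2 = 1) (hc0 : 0 < c) (hsc : s ^ 2 + c ^ 2 = 1)
    (hrel : s * C = 9 * S * c) (hx0 : 0 < x) (hxv : x * 10 = 9 * c * C + s * S) :
    √3 / 2 < x ∧ x ≤ 1 ∧ x < c * C - s * S := by
  have hxC : x * 10 * C = 9 * c := by
    rw [hxv]; linear_combination S * hrel + 9 * c * hSC
  have hcC : c ^ 2 * (1 + 80 * S ^ 2) = C ^ 2 := by
    linear_combination -(s * C + 9 * S * c) * hrel + C ^ 2 * hsc - c ^ 2 * hSC
  have hx2 : x ^ 2 * 100 * (1 + 80 * S ^ 2) = 81 := by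
    have : x ^ 2 * 100 * (1 + 80 * S ^ 2) * C ^ 2 = 81 * C ^ 2 := by
      linear_combination (1 + 80 * S ^ 2) * (x * 10 * C + 9 * c) * hxC + 81 * hcC
    exact mul_right_cancel₀ (by positivity) this
  have hS2 : S ^ 2 < 0.001 := by nlinarith
  have hx34 : 3 / 4 < x ^ 2 := by nlinarith
  refine ⟨?_, ?_, ?_⟩
  · have h3 : (√3) ^ 2 = 3 := sq_sqrt (by norm_num)
    have h30 := sqrt_nonneg 3
    apply lt_of_pow_lt_pow_left₀ 2 hx0.le
    rw [div_pow, h3]; linarith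
  · have : x ^ 2 ≤ 1 := by nlinarith [sq_nonneg S, sq_nonneg x, mul_nonneg (sq_nonneg x) (sq_nonneg S)]
    nlinarith
  · have : 11 * (s * S) < c * C := by
      have e1 : 11 * (s * S) * C = 99 * S ^ 2 * c := by linear_combination 11 * S * hrel
      have e2 : 11 * (s * S) * C < c * C * C := by
        rw [e1]
        have : 99 * S ^ 2 < C ^ 2 := by linarith
        nlinarith
      exact lt_of_mul_lt_mul_right e2 hC0.le
    linarith

theorem exists_par : Nonempty Par := by
  set f : ℝ := π / 100 with hf
  have hpi := pi_pos
  have hpi3 := pi_lt_d2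
  have hf0 : 0 < f := by positivity
  have hf1 : f < 0.0316 := by rw [hf]; linarith
  set S := sin f with hS
  set C := cos f with hC
  have hS0 : 0 < S := sin_pos_of_pos_of_lt_pi hf0 (by linarith [pi_gt_three])
  have hS1 : S < 0.0316 := (sin_lt hf0).trans hf1
  have hC0 : 0 < C := cos_pos_of_mem_Ioo ⟨by linarith, by linarith [pi_gt_three]⟩
  have hSC : S ^ 2 + C ^ 2 = 1 := sin_sq_add_cos_sq f
  set τ := arctan (9 * tan f) with hτ
  have htan : tan f = S / C := tan_eq_sin_div_cos f
  have htanp : 0 < tan f := by rw [htan]; positivity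
  set c := cos τ with hc
  set s := sin τ with hs
  have hc0 : 0 < c := cos_arctan_pos _
  have hsc : s ^ 2 + c ^ 2 = 1 := sin_sq_add_cos_sq τ
  have hrel : s * C = 9 * S * c := by
    have : tan τ = 9 * tan f := tan_arctan _
    rw [tan_eq_sin_div_cos, htan, div_eq_iff hc0.ne'] at this
    calc s * C = 9 * (S / C) * c * C := by rw [← this]
      _ = 9 * S * c := by field_simp
  have hτf : f < τ := by
    have : arctan (tan f) < arctan (9 * tan f) := arctan_strictMono (by linarith)
    rwa [arctan_tan (by linarith) (by linarith [pi_gt_three])] at this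
  have hτ2 : τ < π / 2 := arctan_lt_pi_div_two _
  have hca : cos (τ - f) = c * C + s * S := cos_sub _ _
  have hcb : cos (τ + f) = c * C - s * S := cos_add _ _
  have hs0 : 0 < s := by
    have : 0 < s * C := by rw [hrel]; positivity
    exact pos_of_mul_pos_left this hC0.le
  set x := (5 * cos (τ - f) + 4 * cos (τ + f)) / 10 with hx
  have hxv : x * 10 = 9 * c * C + s * S := by rw [hx, hca, hcb]; ring
  have hx0 : 0 < x := by
    have : 0 < x * 10 := by rw [hxv]; positivity
    linarith
  obtain ⟨hxs, hx1, hxb'⟩ := par_alg S C s c x hS0 hS1 hC0 hSC hc0 hsc hrel hx0 hxv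
  have hxb : x < cos (τ + f) := by rw [hcb]; exact hxb'
  refine ⟨⟨τ - f, τ + f, arccos x, by linarith, by ring, ?_, ?_, ?_, ?_⟩⟩
  · have : arccos (cos (τ + f)) < arccos x :=
      arccos_lt_arccos (by linarith) hxb (cos_le_one _)
    rwa [arccos_cos (by linarith) (by linarith [pi_gt_three])] at this
  · have : arccos x < arccos (√3 / 2) :=
      arccos_lt_arccos (by have := sqrt_nonneg 3; linarith) hxs hx1
    rwa [← cos_pi_div_six, arccos_cos (by linarith) (by linarith)] at this
  · rw [sin_sub, sin_add]; linear_combination hrel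
  · rw [cos_arccos (by linarith) hx1, hx]; ring
end RingGraph

namespace RingGraph
open Real

/-! ### Separation of triangles by lines -/

theorem convex_le (α β c : ℝ) : Convex ℝ {z : ℂ | α * z.re + β * z.im ≤ c} := by
  intro x hx y hy u v hu hv huv
  simp only [Set.mem_ofPred_eq, Complex.add_re, Complex.add_im, Complex.real_smul,
    Complex.mul_re, Complex.mul_im, Complex.ofReal_re, Complex.ofReal_im] at *
  have hc : c = u * c + v * c := by rw [← add_mul, huv, one_mul]
  have h1 := mul_le_mul_of_nonneg_left hx hu
  have h2 := mul_le_mul_of_nonneg_left hy hv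
  linarith

theorem convex_lt_or (α β c : ℝ) (d : ℂ) (hd : c ≤ α * d.re + β * d.im) :
    Convex ℝ {z : ℂ | z = d ∨ c < α * z.re + β * z.im} := by
  intro x hx y hy u v hu hv huv
  by_cases hu0 : u = 0
  · have : v = 1 := by linarith
    subst hu0; subst this; simpa using hy
  by_cases hv0 : v = 0
  · have : u = 1 := by linarith
    subst hv0; subst this; simpa using hx
  have hu' : 0 < u := lt_of_le_of_ne hu (Ne.symm hu0)
  have hv' : 0 < v := lt_of_le_of_ne hv (Ne.symm hv0)
  have key : (x = d ∧ y = d) ∨ c < α * (u • x + v • y).re + β * (u • x + v • y).im := by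
    simp only [Set.mem_ofPred_eq, Complex.add_re, Complex.add_im, Complex.real_smul,
      Complex.mul_re, Complex.mul_im, Complex.ofReal_re, Complex.ofReal_im] at *
    have hc : c = u * c + v * c := by rw [← add_mul, huv, one_mul]
    rcases hx with rfl | hx <;> rcases hy with rfl | hy
    · left; exact ⟨rfl, rfl⟩
    · right
      have h1 := mul_le_mul_of_nonneg_left hd hu
      have h2 := mul_lt_mul_of_pos_left hy hv'
      linarith
    · right
      have h1 := mul_lt_mul_of_pos_left hx hu'
      have h2 := mul_le_mul_of_nonneg_left hd hv
      linarith
    · right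
      have h1 := mul_lt_mul_of_pos_left hx hu'
      have h2 := mul_lt_mul_of_pos_left hy hv'
      linarith
  rcases key with ⟨rfl, rfl⟩ | h
  · left; rw [← add_smul, huv, one_smul]
  · right; exact h

/-- If a line weakly separates two triangles and the second one meets the line in at most
the vertex `d`, then the two closed triangles meet in at most the point `d`. -/
theorem sep (α β c : ℝ) {x y z d e f : ℂ}
    (hx : α * x.re + β * x.im ≤ c) (hy : α * y.re + β * y.im ≤ c) (hz : α * z.re + β * z.im ≤ c)
    (hd : c ≤ α * d.re + β * d.im) (he : c < α * e.re + β * e.im) (hf : c < α * f.re + β * f.im) :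
    (convexHull ℝ ({x, y, z} : Set ℂ) ∩ convexHull ℝ ({d, e, f} : Set ℂ)).Subsingleton := by
  have h1 : convexHull ℝ ({x, y, z} : Set ℂ) ⊆ _ := convexHull_min (by
    rintro w (rfl | rfl | rfl) <;> assumption) (convex_le α β c)
  have h2 : convexHull ℝ ({d, e, f} : Set ℂ) ⊆ _ := convexHull_min (by
    rintro w (rfl | rfl | rfl)
    · left; rfl
    · right; assumption
    · right; assumption) (convex_lt_or α β c d hd)
  have : ∀ w ∈ convexHull ℝ ({x, y, z} : Set ℂ) ∩ convexHull ℝ ({d, e, f} : Set ℂ), w = d := by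
    rintro w ⟨hw1, hw2⟩
    have a1 := h1 hw1
    rcases h2 hw2 with h | h
    · exact h
    · exact absurd a1 (not_le.mpr h)
  intro w hw w' hw'
  rw [this w hw, this w' hw']

/-! ### The base cell -/

namespace Par
variable (q : Par)

/-- Half of the rotation angle. -/
abbrev phi : ℝ := π / 100
/-- Half-width of the rectangular ladder at its teeth. -/
def p : ℝ := cos (π / 6 - q.t)
def g : ℝ := sin (π / 6 - q.t)
/-- Radial coordinate of the inner corner. -/
def R : ℝ := (q.p * cos phi + sin (π / 3 - q.a - phi)) / sin phi
def pt (X Y : ℝ) : ℂ := ⟨q.R + X, q.p - Y⟩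
def S (j : ℕ) : ℂ := q.pt (j * cos q.t) (if Even j then 0 else sin q.t)
def Y (i : ℕ) : ℝ := ((i + 1) / 2 : ℕ) * cos q.a + (i / 2 : ℕ) * cos q.b
def Xi (i : ℕ) : ℝ := ((i + 1) / 2 : ℕ) * sin q.a - (i / 2 : ℕ) * sin q.b
def W (i : ℕ) : ℂ := q.pt (q.Y i) (q.Xi i)
def PS (j : ℕ) : ℂ :=
  if Even j then q.pt (j * cos q.t + q.g) q.p else q.pt ((j + 1) * cos q.t - q.g) q.p
def PW (i : ℕ) : ℂ :=
  if Even i then q.pt (q.Y i + cos (π / 3 - q.a)) (q.Xi i - sin (π / 3 - q.a))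
  else q.pt (q.Y i + cos (π / 3 + q.b)) (q.Xi i - sin (π / 3 + q.b))

@[simp] theorem pt_re (X Y : ℝ) : (q.pt X Y).re = q.R + X := rfl
@[simp] theorem pt_im (X Y : ℝ) : (q.pt X Y).im = q.p - Y := rfl

theorem S_even (m : ℕ) : q.S (2 * m) = q.pt (2 * m * cos q.t) 0 := by
  simp [S]
theorem S_odd (m : ℕ) : q.S (2 * m + 1) = q.pt ((2 * m + 1) * cos q.t) (sin q.t) := by
  have : ¬ Even (2 * m + 1) := by simp
  simp [S, this]
theorem PS_even (m : ℕ) : q.PS (2 * m) = q.pt (2 * m * cos q.t + q.g) q.p := by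
  simp [PS]
theorem PS_odd (m : ℕ) : q.PS (2 * m + 1) = q.pt ((2 * m + 2) * cos q.t - q.g) q.p := by
  have : ¬ Even (2 * m + 1) := by simp
  simp only [PS, this, if_false]
  push_cast; congr 1; ring
theorem Y_even (m : ℕ) : q.Y (2 * m) = m * (cos q.a + cos q.b) := by
  have h1 : (2 * m + 1) / 2 = m := by omega
  have h2 : 2 * m / 2 = m := by omega
  rw [Y, h1, h2]; ring
theorem Y_odd (m : ℕ) : q.Y (2 * m + 1) = m * (cos q.a + cos q.b) + cos q.a := by
  have h1 : (2 * m + 1 + 1) / 2 = m + 1 := by omega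
  have h2 : (2 * m + 1) / 2 = m := by omega
  rw [Y, h1, h2]; push_cast; ring
theorem Xi_even (m : ℕ) : q.Xi (2 * m) = m * (sin q.a - sin q.b) := by
  have h1 : (2 * m + 1) / 2 = m := by omega
  have h2 : 2 * m / 2 = m := by omega
  rw [Xi, h1, h2]; ring
theorem Xi_odd (m : ℕ) : q.Xi (2 * m + 1) = m * (sin q.a - sin q.b) + sin q.a := by
  have h1 : (2 * m + 1 + 1) / 2 = m + 1 := by omega
  have h2 : (2 * m + 1) / 2 = m := by omega
  rw [Xi, h1, h2]; push_cast; ring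
theorem W_even (m : ℕ) :
    q.W (2 * m) = q.pt (m * (cos q.a + cos q.b)) (m * (sin q.a - sin q.b)) := by
  rw [W, Y_even, Xi_even]
theorem W_odd (m : ℕ) : q.W (2 * m + 1) =
    q.pt (m * (cos q.a + cos q.b) + cos q.a) (m * (sin q.a - sin q.b) + sin q.a) := by
  rw [W, Y_odd, Xi_odd]
theorem PW_even (m : ℕ) : q.PW (2 * m) =
    q.pt (m * (cos q.a + cos q.b) + cos (π / 3 - q.a))
      (m * (sin q.a - sin q.b) - sin (π / 3 - q.a)) := by
  simp [PW, Y_even, Xi_even]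
theorem PW_odd (m : ℕ) : q.PW (2 * m + 1) =
    q.pt (m * (cos q.a + cos q.b) + cos q.a + cos (π / 3 + q.b))
      (m * (sin q.a - sin q.b) + sin q.a - sin (π / 3 + q.b)) := by
  have : ¬ Even (2 * m + 1) := by simp
  simp only [PW, this, if_false, Y_odd, Xi_odd]

/-! ### Trigonometric facts -/

theorem b_pos : 0 < q.b := by have := q.ha; have := q.hab; have := pi_pos; linarith
theorem a_lt_b : q.a < q.b := by have := q.hab; have := pi_pos; linarith
theorem t_pos : 0 < q.t := q.b_pos.trans q.hbt

theorem sin_pos' {x : ℝ} (h0 : 0 < x) (h1 : x < π) : 0 < sin x := sin_pos_of_pos_of_lt_pi h0 h1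

/-- The list of inequalities between the trigonometric constants. -/
structure Facts : Prop where
  c_pos : 0 < cos q.t
  s_pos : 0 < sin q.t
  sa_pos : 0 < sin q.a
  sb_pos : 0 < sin q.b
  sa_lt : sin q.a < sin q.t
  sb_lt : sin q.b < sin q.t
  sab : sin q.a < sin q.b
  c_lt_cb : cos q.t < cos q.b
  c_lt_ca : cos q.t < cos q.a
  stb : cos q.t * sin q.b < sin q.t * cos q.b
  sta : cos q.t * sin q.a < sin q.t * cos q.a
  g_pos : 0 < q.g
  g_lt : q.g < cos q.t
  s_lt_p : sin q.t < q.p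
  ka_pos : 0 < cos (π / 3 - q.a)
  ka_lt : cos (π / 3 - q.a) < cos q.a
  kb_pos : 0 < cos (π / 3 + q.b)
  kb_lt : cos (π / 3 + q.b) < cos q.b
  la_pos : 0 < sin (π / 3 - q.a)
  lb_pos : sin q.a < sin (π / 3 + q.b)
  I1 : sin q.a * cos q.b + sin q.b * cos q.a = 2 * cos q.t * sin q.b
  E1 : 0 < sin (π / 3 + q.b) * cos q.b - sin q.b * cos (π / 3 + q.b)
  E2 : 0 < sin (π / 3 - q.a) * cos q.b - sin q.b * cos (π / 3 - q.a)
  E3 : 0 < sin (π / 3 - q.a) * cos q.a + sin q.a * cos (π / 3 - q.a)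

theorem facts : q.Facts := by
  have hpi := pi_pos
  have ha := q.ha
  have hab := q.a_lt_b
  have hbt := q.hbt
  have ht := q.ht
  have hb := q.b_pos
  have ht0 := q.t_pos
  have ss : ∀ {x y : ℝ}, -(π/2) ≤ x → y ≤ π/2 → x < y → sin x < sin y :=
    fun h1 h2 h3 => sin_lt_sin_of_lt_of_le_pi_div_two h1 h2 h3
  have cc : ∀ {x y : ℝ}, 0 ≤ x → y ≤ π → x < y → cos y < cos x :=
    fun h1 h2 h3 => cos_lt_cos_of_nonneg_of_le_pi h1 h2 h3
  have cp : ∀ {x : ℝ}, -(π/2) < x → x < π/2 → 0 < cos x := fun h1 h2 => cos_pos_of_mem_Ioo ⟨h1, h2⟩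
  refine ⟨cp ?_ ?_, sin_pos' ?_ ?_, sin_pos' ?_ ?_, sin_pos' ?_ ?_, ss ?_ ?_ ?_, ss ?_ ?_ ?_,
    ss ?_ ?_ ?_, cc ?_ ?_ ?_, cc ?_ ?_ ?_, ?_, ?_, sin_pos' ?_ ?_, ?_, ?_, cp ?_ ?_, cc ?_ ?_ ?_,
    cp ?_ ?_, cc ?_ ?_ ?_, sin_pos' ?_ ?_, ss ?_ ?_ ?_, ?_, ?_, ?_, ?_⟩ <;> try linarith
  · have := sin_pos' (x := q.t - q.b) (by linarith) (by linarith)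
    rw [sin_sub] at this; linarith
  · have := sin_pos' (x := q.t - q.a) (by linarith) (by linarith)
    rw [sin_sub] at this; linarith
  · rw [g, ← cos_pi_div_two_sub]; apply cc <;> linarith
  · rw [p, ← sin_pi_div_two_sub]; apply ss <;> linarith
  · have h1 := q.h1
    have h2 := q.h2
    linear_combination (1 / 5) * sin q.b * (-h2) + (1 / 5) * cos q.b * h1
  · rw [mul_comm (sin q.b), ← sin_sub]; apply sin_pos' <;> linarith
  · rw [mul_comm (sin q.b), ← sin_sub]; apply sin_pos' <;> linarith
  · rw [mul_comm (sin q.a), ← sin_add]; apply sin_pos' <;> linarith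

end Par
end RingGraph

namespace RingGraph
open Real
namespace Par
variable (q : Par)

theorem even_odd (j : ℕ) : ∃ m, j = 2 * m ∨ j = 2 * m + 1 := ⟨j / 2, by omega⟩

theorem S_re (j : ℕ) : (q.S j).re = q.R + j * cos q.t := rfl
theorem W_re (j : ℕ) : (q.W j).re = q.R + q.Y j := rfl

theorem PS_slab (j : ℕ) :
    q.R + j * cos q.t < (q.PS j).re ∧ (q.PS j).re < q.R + (j + 1 : ℕ) * cos q.t := by
  have F := q.facts
  have h1 := F.g_pos
  have h2 := F.g_lt
  obtain ⟨m, rfl | rfl⟩ := even_odd j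
  · rw [PS_even]; simp only [pt_re]; push_cast; constructor <;> linarith
  · rw [PS_odd]; simp only [pt_re]; push_cast; constructor <;> linarith

theorem PW_slab (i : ℕ) :
    q.R + q.Y i < (q.PW i).re ∧ (q.PW i).re < q.R + q.Y (i + 1) := by
  have F := q.facts
  have h1 := F.ka_pos
  have h2 := F.ka_lt
  have h3 := F.kb_pos
  have h4 := F.kb_lt
  obtain ⟨m, rfl | rfl⟩ := even_odd i
  · rw [PW_even, Y_even, Y_odd]; simp only [pt_re]; constructor <;> linarith
  · rw [PW_odd, Y_odd, show 2 * m + 1 + 1 = 2 * (m + 1) by ring, Y_even]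
    simp only [pt_re]; push_cast; constructor <;> linarith

theorem Y_lt_succ (i : ℕ) : q.Y i < q.Y (i + 1) := by
  have := q.PW_slab i; linarith

theorem Y_mono : StrictMono q.Y := strictMono_nat_of_lt_succ q.Y_lt_succ

theorem le_Y (i : ℕ) : i * cos q.t ≤ q.Y i := by
  have F := q.facts
  have h1 := F.c_lt_ca.le
  have h2 := F.c_lt_cb.le
  obtain ⟨m, rfl | rfl⟩ := even_odd i
  · rw [Y_even]; push_cast
    have : (0:ℝ) ≤ m := m.cast_nonneg
    nlinarith
  · rw [Y_odd]; push_cast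
    have : (0:ℝ) ≤ m := m.cast_nonneg
    nlinarith

theorem Y_le (i : ℕ) (hi : i ≤ 9) : q.Y i ≤ (i + 1 : ℕ) * cos q.t := by
  have F := q.facts
  have h1 := F.c_lt_ca.le
  have h2 := F.c_lt_cb.le
  have h3 := q.h2
  obtain ⟨m, rfl | rfl⟩ := even_odd i
  · rw [Y_even]; push_cast
    have : (0:ℝ) ≤ 4 - m := by
      have : (m:ℝ) ≤ 4 := by exact_mod_cast (by omega : m ≤ 4)
      linarith
    nlinarith
  · rw [Y_odd]; push_cast
    have : (0:ℝ) ≤ 4 - m := by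
      have : (m:ℝ) ≤ 4 := by exact_mod_cast (by omega : m ≤ 4)
      linarith
    nlinarith

/-- Base triangles. -/
def ST (j : ℕ) : Set ℂ := {q.S j, q.S (j + 1), q.PS j}
def WT (i : ℕ) : Set ℂ := {q.W i, q.W (i + 1), q.PW i}

abbrev Touch (A B : Set ℂ) : Prop := (convexHull ℝ A ∩ convexHull ℝ B).Subsingleton

theorem Touch.symm {A B : Set ℂ} (h : Touch A B) : Touch B A := by
  unfold Touch at *; rwa [Set.inter_comm]

theorem slab_sep {x y z d e f : ℂ} (l : ℝ) (h1 : x.re ≤ l) (h2 : y.re ≤ l) (h3 : z.re ≤ l)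
    (h4 : l ≤ d.re) (h5 : l < e.re) (h6 : l < f.re) :
    Touch ({x, y, z} : Set ℂ) {d, e, f} := by
  apply sep 1 0 l <;> linarith

theorem touch_SS {j j' : ℕ} (h : j < j') : Touch (q.ST j) (q.ST j') := by
  have c0 := q.facts.c_pos
  have a1 := q.PS_slab j
  have a2 := q.PS_slab j'
  have hc : ((j + 1 : ℕ) : ℝ) * cos q.t ≤ j' * cos q.t :=
    mul_le_mul_of_nonneg_right (by exact_mod_cast h) c0.le
  apply slab_sep (q.R + (j + 1 : ℕ) * cos q.t) <;> (try simp only [S_re]) <;> push_cast at * <;> linarith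

theorem touch_WW {i i' : ℕ} (h : i < i') : Touch (q.WT i) (q.WT i') := by
  have a1 := q.PW_slab i
  have a2 := q.PW_slab i'
  have b1 := q.Y_lt_succ i
  have b2 := q.Y_lt_succ i'
  have b3 : q.Y (i + 1) ≤ q.Y i' := q.Y_mono.monotone h
  apply slab_sep (q.R + q.Y (i + 1)) <;> (try simp only [W_re]) <;> linarith

theorem touch_WS_low {i j : ℕ} (hi : i ≤ 8) (h : i + 2 ≤ j) : Touch (q.WT i) (q.ST j) := by
  have c0 := q.facts.c_pos
  have a1 := q.PW_slab i
  have a2 := q.PS_slab j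
  have b1 := q.Y_lt_succ i
  have b2 := q.Y_le (i + 1) (by omega)
  have hc : ((i + 1 + 1 : ℕ) : ℝ) * cos q.t ≤ j * cos q.t :=
    mul_le_mul_of_nonneg_right (by exact_mod_cast h) c0.le
  apply slab_sep (q.R + q.Y (i + 1)) <;> (try simp only [W_re, S_re]) <;> push_cast at * <;> linarith

theorem touch_WS_high {i j : ℕ} (h : j < i) : Touch (q.ST j) (q.WT i) := by
  have c0 := q.facts.c_pos
  have a1 := q.PW_slab i
  have a2 := q.PS_slab j
  have b1 := q.Y_lt_succ i
  have b2 := q.le_Y i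
  have hc : ((j + 1 : ℕ) : ℝ) * cos q.t ≤ i * cos q.t :=
    mul_le_mul_of_nonneg_right (by exact_mod_cast h) c0.le
  apply slab_sep (q.R + (j + 1 : ℕ) * cos q.t) <;> (try simp only [W_re, S_re]) <;> push_cast at * <;>
    linarith

/-- rotate the listing of a triangle -/
theorem tri_rot (x y z : ℂ) : ({x, y, z} : Set ℂ) = {y, x, z} := Set.insert_comm _ _ _

section B
/-- the separating line of the `2m+2`-nd wedge edge, evaluated at `pt X Y` minus threshold -/
theorem lineB (X Y w : ℝ) : (sin q.b * (q.pt X Y).re + (-cos q.b) * (q.pt X Y).im) -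
    (sin q.b * (q.R + w) - cos q.b * q.p) = sin q.b * (X - w) + cos q.b * Y := by
  simp only [pt_re, pt_im]; ring
theorem lineA (X Y w : ℝ) : (-sin q.a * (q.pt X Y).re + (-cos q.a) * (q.pt X Y).im) -
    (-sin q.a * (q.R + w) - cos q.a * q.p) = -sin q.a * (X - w) + cos q.a * Y := by
  simp only [pt_re, pt_im]; ring

theorem leB {X Y w : ℝ} (h : sin q.b * (X - w) + cos q.b * Y ≤ 0) :
    sin q.b * (q.pt X Y).re + (-cos q.b) * (q.pt X Y).im ≤
    sin q.b * (q.R + w) - cos q.b * q.p := by linarith [q.lineB X Y w]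
theorem leB' {X Y w : ℝ} (h : 0 ≤ sin q.b * (X - w) + cos q.b * Y) :
    sin q.b * (q.R + w) - cos q.b * q.p ≤
    sin q.b * (q.pt X Y).re + (-cos q.b) * (q.pt X Y).im := by linarith [q.lineB X Y w]
theorem ltB' {X Y w : ℝ} (h : 0 < sin q.b * (X - w) + cos q.b * Y) :
    sin q.b * (q.R + w) - cos q.b * q.p <
    sin q.b * (q.pt X Y).re + (-cos q.b) * (q.pt X Y).im := by linarith [q.lineB X Y w]
theorem leA {X Y w : ℝ} (h : -sin q.a * (X - w) + cos q.a * Y ≤ 0) :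
    -sin q.a * (q.pt X Y).re + (-cos q.a) * (q.pt X Y).im ≤
    -sin q.a * (q.R + w) - cos q.a * q.p := by linarith [q.lineA X Y w]
theorem leA' {X Y w : ℝ} (h : 0 ≤ -sin q.a * (X - w) + cos q.a * Y) :
    -sin q.a * (q.R + w) - cos q.a * q.p ≤
    -sin q.a * (q.pt X Y).re + (-cos q.a) * (q.pt X Y).im := by linarith [q.lineA X Y w]
theorem ltA' {X Y w : ℝ} (h : 0 < -sin q.a * (X - w) + cos q.a * Y) :
    -sin q.a * (q.R + w) - cos q.a * q.p <
    -sin q.a * (q.pt X Y).re + (-cos q.a) * (q.pt X Y).im := by linarith [q.lineA X Y w]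

theorem gb : q.g * sin q.b < q.p * cos q.b := by
  have F := q.facts
  have cb : 0 < cos q.b := F.c_pos.trans F.c_lt_cb
  calc q.g * sin q.b < cos q.t * sin q.b := mul_lt_mul_of_pos_right F.g_lt F.sb_pos
    _ < sin q.t * cos q.b := F.stb
    _ < q.p * cos q.b := mul_lt_mul_of_pos_right F.s_lt_p cb
theorem ga : q.g * sin q.a < q.p * cos q.a := by
  have F := q.facts
  have cb : 0 < cos q.a := F.c_pos.trans F.c_lt_ca
  calc q.g * sin q.a < cos q.t * sin q.a := mul_lt_mul_of_pos_right F.g_lt F.sa_pos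
    _ < sin q.t * cos q.a := F.sta
    _ < q.p * cos q.a := mul_lt_mul_of_pos_right F.s_lt_p cb

/-- wedge `2m+1`, rectangle `2m+1`. -/
theorem touch_oo (m : ℕ) : Touch (q.WT (2 * m + 1)) (q.ST (2 * m + 1)) := by
  have F := q.facts
  have gb := q.gb
  have I := congrArg (fun z => (m : ℝ) * z) F.I1
  have I1 := F.I1
  have stb := F.stb
  have E1 := F.E1
  unfold WT ST
  rw [tri_rot (q.S _), show 2 * m + 1 + 1 = 2 * (m + 1) by ring, W_odd, W_even, PW_odd, S_even, S_odd,
    PS_odd]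
  push_cast
  refine sep (sin q.b) (-cos q.b) (sin q.b * (q.R + (2 * m + 2) * cos q.t) - cos q.b * q.p)
    (q.leB ?_) (q.leB ?_) (q.leB ?_) (q.leB' ?_) (q.ltB' ?_) (q.ltB' ?_) <;> linarith

/-- wedge `2m+1`, rectangle `2m+2`. -/
theorem touch_oe (m : ℕ) : Touch (q.WT (2 * m + 1)) (q.ST (2 * m + 2)) := by
  have F := q.facts
  have gb := q.gb
  have I := congrArg (fun z => (m : ℝ) * z) F.I1
  have I1 := F.I1
  have stb := F.stb
  have E1 := F.E1
  have cb : 0 < cos q.b := F.c_pos.trans F.c_lt_cb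
  have k1 := mul_pos F.c_pos F.sb_pos
  have k2 := mul_pos F.s_pos cb
  have k3 := mul_pos F.g_pos F.sb_pos
  have k4 := mul_pos (F.s_pos.trans F.s_lt_p) cb
  unfold WT ST
  rw [show 2 * m + 1 + 1 = 2 * (m + 1) by ring,
    W_odd, W_even, PW_odd, S_even, S_odd, PS_even]
  push_cast
  refine sep (sin q.b) (-cos q.b) (sin q.b * (q.R + (2 * m + 2) * cos q.t) - cos q.b * q.p)
    (q.leB ?_) (q.leB ?_) (q.leB ?_) (q.leB' ?_) (q.ltB' ?_) (q.ltB' ?_) <;> linarith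

/-- wedge `2m`, rectangle `2m+1`. -/
theorem touch_eo (m : ℕ) : Touch (q.WT (2 * m)) (q.ST (2 * m + 1)) := by
  have F := q.facts
  have gb := q.gb
  have I := congrArg (fun z => (m : ℝ) * z) F.I1
  have I1 := F.I1
  have stb := F.stb
  have E2 := F.E2
  have k1 := mul_pos F.c_pos F.sb_pos
  unfold WT ST
  rw [tri_rot (q.S _), show 2 * m + 1 + 1 = 2 * (m + 1) by ring, W_odd, W_even, PW_even, S_even, S_odd,
    PS_odd]
  push_cast
  refine sep (sin q.b) (-cos q.b) (sin q.b * (q.R + (2 * m + 2) * cos q.t) - cos q.b * q.p)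
    (q.leB ?_) (q.leB ?_) (q.leB ?_) (q.leB' ?_) (q.ltB' ?_) (q.ltB' ?_) <;> linarith

/-- wedge `2m`, rectangle `2m`. -/
theorem touch_ee (m : ℕ) : Touch (q.WT (2 * m)) (q.ST (2 * m)) := by
  have F := q.facts
  have ga := q.ga
  have h1 := q.h1
  have I : sin q.a * cos q.b + sin q.b * cos q.a = 5 / 2 * cos q.t * sin q.a := by
    rw [F.I1]; linear_combination (-(1/2) * cos q.t) * h1
  have mI := congrArg (fun z => (m : ℝ) * z) I
  have sta := F.sta
  have E3 := F.E3
  have k1 := mul_nonneg (m.cast_nonneg (α := ℝ)) (mul_pos F.c_pos F.sa_pos).le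
  unfold WT ST
  rw [W_odd, W_even, PW_even, S_even, S_odd, PS_even]
  refine sep (-sin q.a) (-cos q.a) (-sin q.a * (q.R + 5 / 2 * m * cos q.t) - cos q.a * q.p)
    (q.leA ?_) (q.leA ?_) (q.leA ?_) (q.leA' ?_) (q.ltA' ?_) (q.ltA' ?_) <;> linarith

theorem touch_WS {i j : ℕ} (hi : i ≤ 8) (hj : j ≤ 9) : Touch (q.WT i) (q.ST j) := by
  rcases lt_or_ge j i with h | h
  · exact (q.touch_WS_high h).symm
  rcases le_or_gt (i + 2) j with h' | h'
  · exact q.touch_WS_low hi h'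
  obtain ⟨m, rfl | rfl⟩ := even_odd i
  · obtain rfl | rfl : j = 2 * m ∨ j = 2 * m + 1 := by omega
    · exact q.touch_ee m
    · exact q.touch_eo m
  · obtain rfl | rfl : j = 2 * m + 1 ∨ j = 2 * m + 2 := by omega
    · exact q.touch_oo m
    · exact q.touch_oe m
end B

end Par
end RingGraph

namespace RingGraph
open Real
namespace Par
variable (q : Par)

theorem phi_pos : 0 < phi := by have := pi_pos; unfold phi; positivity
theorem sphi_pos : 0 < sin phi :=
  sin_pos' phi_pos (by have := pi_pos; unfold phi; linarith)
theorem cphi_pos : 0 < cos phi :=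
  cos_pos_of_mem_Ioo ⟨by have := pi_pos; unfold phi; linarith, by have := pi_pos; unfold phi; linarith⟩

/-- `lat z < 0` says that `z` is below the ray of angle `phi`. -/
def lat (z : ℂ) : ℝ := z.im * cos phi - z.re * sin phi

theorem b_eq : q.b = q.a + 2 * phi := q.hab

theorem tau_lt : q.a + phi < π / 6 := by
  have := q.ht; have := q.hbt; have := q.b_eq; have := phi_pos; linarith

theorem lam_pos : 0 < sin (π / 3 - q.a - phi) := by
  have := q.tau_lt; have := pi_pos; have := q.ha; have := phi_pos
  apply sin_pos' <;> linarith

theorem R_pos : 0 < q.R := by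
  have F := q.facts
  have h0 : 0 < q.p := F.s_pos.trans F.s_lt_p
  have := q.lam_pos
  have := sphi_pos
  have := cphi_pos
  unfold R; positivity

theorem lat_pt (X Y : ℝ) :
    lat (q.pt X Y) = -sin (π / 3 - q.a - phi) - Y * cos phi - X * sin phi := by
  have := sphi_pos.ne'
  have h : q.R * sin phi = q.p * cos phi + sin (π / 3 - q.a - phi) := by
    unfold R; field_simp
  simp only [lat, pt_re, pt_im]
  linear_combination -h

theorem tau1 : sin q.a * cos phi + cos q.a * sin phi = sin (q.a + phi) := (sin_add _ _).symm
theorem tau2 : sin q.b * cos phi - cos q.b * sin phi = sin (q.a + phi) := by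
  rw [← sin_sub, q.b_eq]; congr 1; ring

/-- Membership in the open base cone. -/
structure InC (z : ℂ) : Prop where
  im : 0 < z.im
  lat : lat z < 0
  re : 0 < z.re

theorem S_in (j : ℕ) : InC (q.S j) := by
  have F := q.facts
  have hl := q.lam_pos
  have h1 := F.s_pos
  have h2 := F.s_lt_p
  have h3 := q.R_pos
  have h4 := F.c_pos
  have h5 := sphi_pos
  have h6 := cphi_pos
  have h7 : 0 ≤ (j : ℝ) * cos q.t := by positivity
  have h8 := mul_nonneg h7 h5.le
  refine ⟨?_, ?_, by rw [S_re]; linarith⟩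
  · unfold S; rw [pt_im]; split_ifs <;> linarith
  · unfold S; rw [lat_pt]; have := mul_pos h1 h6
    split_ifs <;> linarith

theorem Y_nonneg (i : ℕ) : 0 ≤ q.Y i := by
  have F := q.facts
  exact le_trans (mul_nonneg i.cast_nonneg F.c_pos.le) (q.le_Y i)

theorem Xi_le (i : ℕ) : q.Xi i ≤ sin q.a := by
  have F := q.facts
  have h1 := F.sab
  have h2 := F.sa_pos
  obtain ⟨m, rfl | rfl⟩ := even_odd i
  · rw [Xi_even]; have := m.cast_nonneg (α := ℝ); nlinarith
  · rw [Xi_odd]; have := m.cast_nonneg (α := ℝ); nlinarith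

theorem W_in (i : ℕ) : InC (q.W i) := by
  have F := q.facts
  have hl := q.lam_pos
  have h1 := F.sa_lt
  have h2 := F.s_lt_p
  have h3 := q.R_pos
  have h4 := q.Y_nonneg i
  have h5 := q.Xi_le i
  refine ⟨?_, ?_, by rw [W_re]; linarith⟩
  · unfold W; rw [pt_im]; linarith
  · have t1 := q.tau1
    have t2 := q.tau2
    have t3 : 0 < sin (q.a + phi) := by
      have := q.tau_lt; have := pi_pos; have := q.ha; have := phi_pos
      apply sin_pos' <;> linarith
    obtain ⟨m, rfl | rfl⟩ := even_odd i
    · rw [W_even, lat_pt]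
      have : (m : ℝ) * (sin q.a - sin q.b) * cos phi + m * (cos q.a + cos q.b) * sin phi = 0 := by
        linear_combination (m : ℝ) * t1 - (m : ℝ) * t2
      linarith
    · rw [W_odd, lat_pt]
      have : ((m : ℝ) * (sin q.a - sin q.b) + sin q.a) * cos phi +
          (m * (cos q.a + cos q.b) + cos q.a) * sin phi = sin (q.a + phi) := by
        linear_combination (m : ℝ) * t1 - (m : ℝ) * t2 + t1
      linarith

theorem PS_im (j : ℕ) : (q.PS j).im = 0 := by unfold PS; split_ifs <;> simp

theorem PS_re_pos (j : ℕ) : 0 < (q.PS j).re := by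
  have F := q.facts
  have := q.PS_slab j
  have := q.R_pos
  have : 0 ≤ (j : ℝ) * cos q.t := mul_nonneg j.cast_nonneg F.c_pos.le
  linarith

theorem PS_lat (j : ℕ) : lat (q.PS j) < 0 := by
  have := mul_pos (q.PS_re_pos j) sphi_pos
  unfold lat; rw [PS_im]; linarith

theorem PW_re_pos (j : ℕ) : 0 < (q.PW j).re := by
  have := q.PW_slab j
  have := q.R_pos
  have := q.Y_nonneg j
  linarith

theorem PW_lat (i : ℕ) : lat (q.PW i) = 0 := by
  have t1 := q.tau1
  have t2 := q.tau2
  obtain ⟨m, rfl | rfl⟩ := even_odd i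
  · rw [PW_even, lat_pt, sin_sub (π / 3 - q.a)]
    linear_combination (-(m : ℝ)) * t1 + (m : ℝ) * t2
  · rw [PW_odd, lat_pt, show π / 3 - q.a - phi = π / 3 - (q.a + phi) by ring]
    have e : sin (π / 3 + q.b) * cos phi - cos (π / 3 + q.b) * sin phi =
        sin (π / 3 + (q.a + phi)) := by
      rw [← sin_sub, q.b_eq]; congr 1; ring
    rw [sin_add (π / 3) (q.a + phi)] at e
    rw [sin_sub (π / 3)]
    rw [cos_pi_div_three] at *
    linear_combination (-(m : ℝ)) * t1 + (m : ℝ) * t2 + e - t1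

theorem PW_im (i : ℕ) : 0 < (q.PW i).im := by
  have h := q.PW_lat i
  have h1 := mul_pos (q.PW_re_pos i) sphi_pos
  unfold lat at h
  exact pos_of_mul_pos_left (by linarith : 0 < (q.PW i).im * cos phi) cphi_pos.le

theorem S_zero : q.S 0 = q.W 0 := by
  have h1 := q.S_even 0
  have h2 := q.W_even 0
  simp at h1 h2; rw [h1, h2]

theorem S_ten : q.S 10 = q.W 9 := by
  have h1 := q.S_even 5
  have h2 := q.W_odd 4
  norm_num at h1 h2
  rw [h1, h2]
  have e1 := q.h1
  have e2 := q.h2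
  congr 1 <;> linarith

/-- Directions -/
def TriDir (x y z : ℂ) (θ : ℝ) : Prop :=
  ∃ w : ℂ, w ^ 2 - w + 1 = 0 ∧ y - x = Complex.exp (θ * Complex.I) ∧
    z - x = Complex.exp (θ * Complex.I) * w

theorem exp_re' (θ : ℝ) : (Complex.exp (θ * Complex.I)).re = cos θ := Complex.exp_ofReal_mul_I_re θ
theorem exp_im' (θ : ℝ) : (Complex.exp (θ * Complex.I)).im = sin θ := Complex.exp_ofReal_mul_I_im θ

theorem triDir_of (x y z : ℂ) (θ ε : ℝ) (hε : ε = 1 ∨ ε = -1)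
    (h1 : y.re - x.re = cos θ) (h2 : y.im - x.im = sin θ)
    (h3 : z.re - x.re = cos (θ + ε * (π / 3))) (h4 : z.im - x.im = sin (θ + ε * (π / 3))) :
    TriDir x y z θ := by
  have h33 : (√3) ^ 2 = 3 := sq_sqrt (by norm_num)
  refine ⟨⟨1 / 2, ε * (√3 / 2)⟩, ?_, ?_, ?_⟩
  · apply Complex.ext
    · rcases hε with rfl | rfl <;> simp [pow_two] <;> nlinarith
    · simp [pow_two]; ring
  · apply Complex.ext
    · rw [exp_re', Complex.sub_re, h1]
    · rw [exp_im', Complex.sub_im, h2]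
  · apply Complex.ext
    · rw [Complex.mul_re, exp_re', exp_im', Complex.sub_re, h3, cos_add]
      rcases hε with rfl | rfl <;> simp [cos_neg, sin_neg]
    · rw [Complex.mul_im, exp_re', exp_im', Complex.sub_im, h4, sin_add]
      rcases hε with rfl | rfl <;> simp [cos_neg, sin_neg] <;> ring

theorem g_eq : q.g = cos q.t / 2 - √3 / 2 * sin q.t := by
  rw [g, sin_sub, sin_pi_div_six, cos_pi_div_six]; ring
theorem p_eq : q.p = √3 / 2 * cos q.t + sin q.t / 2 := by
  rw [p, cos_sub, sin_pi_div_six, cos_pi_div_six]; ring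

theorem S_dir (j : ℕ) : TriDir (q.S j) (q.S (j + 1)) (q.PS j) (if Even j then -q.t else q.t) := by
  have hg := q.g_eq
  have hp := q.p_eq
  obtain ⟨m, rfl | rfl⟩ := even_odd j
  · rw [if_pos (by simp), S_even, S_odd, PS_even]
    apply triDir_of _ _ _ _ (-1) (by simp) <;> simp [cos_add, sin_add] <;> linarith
  · rw [if_neg (by simp), show 2 * m + 1 + 1 = 2 * (m + 1) by ring, S_even, S_odd, PS_odd]
    apply triDir_of _ _ _ _ (-1) (by simp) <;> simp [cos_add, sin_add] <;> linarith

theorem W_dir (i : ℕ) : TriDir (q.W i) (q.W (i + 1)) (q.PW i) (if Even i then -q.a else q.b) := by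
  obtain ⟨m, rfl | rfl⟩ := even_odd i
  · rw [if_pos (by simp), W_even, W_odd, PW_even]
    apply triDir_of _ _ _ _ 1 (by simp) <;> simp [cos_add, sin_add, cos_sub, sin_sub] <;> linarith
  · rw [if_neg (by simp), show 2 * m + 1 + 1 = 2 * (m + 1) by ring, W_even, W_odd, PW_odd]
    apply triDir_of _ _ _ _ 1 (by simp) <;> simp [cos_add, sin_add] <;> linarith

/-! ### Cyclic indexing of the base cell -/

def H (k : ZMod 19) : ℂ := if k.val < 10 then q.S (k.val + 1) else q.W (18 - k.val)
def P (k : ZMod 19) : ℂ := if k.val < 10 then q.PS k.val else q.PW (18 - k.val)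
def th (k : ZMod 19) : ℝ :=
  if k.val < 10 then (if Even k.val then -q.t else q.t)
  else (if Even (18 - k.val) then -q.a else q.b)

theorem val_lt (k : ZMod 19) : k.val < 19 := ZMod.val_lt k

theorem val_pred (k : ZMod 19) : (k - 1).val = if k.val = 0 then 18 else k.val - 1 := by
  revert k; decide

theorem H_pred_lt (k : ZMod 19) (hk : k.val < 10) : q.H (k - 1) = q.S k.val := by
  unfold H; rw [val_pred]
  by_cases h : k.val = 0
  · simp [h, S_zero]
  · rw [if_neg h, if_pos (by omega)]; congr 1; omega

theorem H_pred_ge (k : ZMod 19) (hk : ¬ k.val < 10) : q.H (k - 1) = q.W (18 - k.val + 1) := by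
  have := val_lt k
  have hv : (k - 1).val = k.val - 1 := by rw [val_pred, if_neg (by omega)]
  unfold H; rw [hv]
  by_cases h : k.val = 10
  · simp [h, S_ten]
  · rw [if_neg (by omega)]; congr 1; omega

theorem H_lt (k : ZMod 19) (hk : k.val < 10) : q.H k = q.S (k.val + 1) := by simp [H, hk]
theorem H_ge (k : ZMod 19) (hk : ¬ k.val < 10) : q.H k = q.W (18 - k.val) := by simp [H, hk]
theorem P_lt (k : ZMod 19) (hk : k.val < 10) : q.P k = q.PS k.val := by simp [P, hk]
theorem P_ge (k : ZMod 19) (hk : ¬ k.val < 10) : q.P k = q.PW (18 - k.val) := by simp [P, hk]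

theorem H_in (k : ZMod 19) : InC (q.H k) := by
  unfold H; split_ifs
  · exact q.S_in _
  · exact q.W_in _

def BT (k : ZMod 19) : Set ℂ := {q.H (k - 1), q.H k, q.P k}

theorem BT_lt (k : ZMod 19) (hk : k.val < 10) : q.BT k = q.ST k.val := by
  rw [BT, ST, q.H_pred_lt k hk, q.H_lt k hk, q.P_lt k hk]
theorem BT_ge (k : ZMod 19) (hk : ¬ k.val < 10) : q.BT k = q.WT (18 - k.val) := by
  rw [BT, WT, q.H_pred_ge k hk, q.H_ge k hk, q.P_ge k hk, tri_rot]

theorem touch_base {k k' : ZMod 19} (h : k ≠ k') : Touch (q.BT k) (q.BT k') := by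
  have hv : k.val ≠ k'.val := fun e => h (ZMod.val_injective 19 e)
  have := val_lt k
  have := val_lt k'
  by_cases hk : k.val < 10 <;> by_cases hk' : k'.val < 10
  · rw [q.BT_lt k hk, q.BT_lt k' hk']
    rcases lt_or_gt_of_ne hv with h | h
    · exact q.touch_SS h
    · exact (q.touch_SS h).symm
  · rw [q.BT_lt k hk, q.BT_ge k' hk']
    exact (q.touch_WS (by omega) (by omega)).symm
  · rw [q.BT_ge k hk, q.BT_lt k' hk']
    exact q.touch_WS (by omega) (by omega)
  · rw [q.BT_ge k hk, q.BT_ge k' hk']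
    rcases lt_or_gt_of_ne hv with h | h
    · exact (q.touch_WW (by omega)).symm
    · exact q.touch_WW (by omega)

theorem S_inj {j j' : ℕ} (h : q.S j = q.S j') : j = j' := by
  have := congrArg Complex.re h
  rw [S_re, S_re] at this
  have := mul_right_cancel₀ q.facts.c_pos.ne' (add_left_cancel this)
  exact_mod_cast this
theorem W_inj {j j' : ℕ} (h : q.W j = q.W j') : j = j' := by
  have := congrArg Complex.re h
  rw [W_re, W_re] at this
  exact q.Y_mono.injective (add_left_cancel this)

theorem S_ne_W {j i : ℕ} (hi0 : 1 ≤ i) (hi : i ≤ 8) : q.S j ≠ q.W i := by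
  intro h
  have F := q.facts
  have h1 := q.h1
  have sa := F.sa_pos
  have sab := F.sab
  have sat := F.sa_lt
  have s0 := F.s_pos
  have := congrArg Complex.im h
  unfold S W at this
  simp only [pt_im] at this
  have hx : q.Xi i = if Even j then 0 else sin q.t := by linarith
  obtain ⟨m, rfl | rfl⟩ := even_odd i
  · rw [Xi_even] at hx
    have hm : (1:ℝ) ≤ m := by exact_mod_cast (by omega : 1 ≤ m)
    have : (m:ℝ) * (sin q.a - sin q.b) < 0 := by nlinarith
    split_ifs at hx <;> linarith
  · have hle := q.Xi_le (2 * m + 1)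
    rw [hx] at hle
    rw [Xi_odd] at hx
    have hm : (m:ℝ) ≤ 3 := by exact_mod_cast (by omega : m ≤ 3)
    have : 0 < (m:ℝ) * (sin q.a - sin q.b) + sin q.a := by nlinarith
    split_ifs at hx hle <;> linarith

theorem H_inj {k k' : ZMod 19} (h : q.H k = q.H k') : k = k' := by
  apply ZMod.val_injective 19
  have l1 := val_lt k
  have l2 := val_lt k'
  have key : ∀ j i : ℕ, j < 10 → i ≤ 8 → q.S (j + 1) ≠ q.W i := by
    intro j i hj hi e
    rcases Nat.eq_zero_or_pos i with rfl | hi0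
    · rw [← S_zero] at e
      have := q.S_inj e; omega
    · exact q.S_ne_W hi0 hi e
  unfold H at h
  split_ifs at h with h1 h2 h2
  · have := q.S_inj h; omega
  · exact absurd h (key _ _ h1 (by omega))
  · exact absurd h.symm (key _ _ h2 (by omega))
  · have := q.W_inj h; omega

theorem P_inj {k k' : ZMod 19} (h : q.P k = q.P k') : k = k' := by
  apply ZMod.val_injective 19
  have l1 := val_lt k
  have l2 := val_lt k'
  have c0 := q.facts.c_pos
  have hS : ∀ j j' : ℕ, j < j' → q.PS j ≠ q.PS j' := by
    intro j j' hj e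
    have a1 := q.PS_slab j
    have a2 := q.PS_slab j'
    rw [e] at a1
    have hc : ((j + 1 : ℕ) : ℝ) * cos q.t ≤ j' * cos q.t :=
      mul_le_mul_of_nonneg_right (by exact_mod_cast hj) c0.le
    linarith
  have hW : ∀ j j' : ℕ, j < j' → q.PW j ≠ q.PW j' := by
    intro j j' hj e
    have a1 := q.PW_slab j
    have a2 := q.PW_slab j'
    rw [e] at a1
    have hc : q.Y (j + 1) ≤ q.Y j' := q.Y_mono.monotone hj
    linarith
  have hSW : ∀ j i : ℕ, q.PS j ≠ q.PW i := by
    intro j i e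
    have := q.PW_im i
    rw [← e, PS_im] at this
    exact lt_irrefl _ this
  unfold P at h
  split_ifs at h with h1 h2 h2
  · by_contra hn
    rcases lt_or_gt_of_ne hn with hl | hl
    · exact hS _ _ hl h
    · exact hS _ _ hl h.symm
  · exact absurd h (hSW _ _)
  · exact absurd h.symm (hSW _ _)
  · by_contra hn
    rcases lt_or_gt_of_ne hn with hl | hl
    · exact hW _ _ (by omega) h.symm
    · exact hW _ _ (by omega) h

/-- The triangle `k` meets the boundary of the base cone at most in `P k`. -/
theorem hull_in (k : ZMod 19) {z : ℂ} (hz : z ∈ convexHull ℝ (q.BT k)) :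
    0 < z.re ∧ 0 ≤ z.im ∧ lat z ≤ 0 ∧ ((z.im = 0 ∨ lat z = 0) → z = q.P k) := by
  have h1 := q.H_in (k - 1)
  have h2 := q.H_in k
  have hP : 0 < (q.P k).re ∧ ((k.val < 10 ∧ (q.P k).im = 0 ∧ lat (q.P k) < 0) ∨
      (¬ k.val < 10 ∧ 0 < (q.P k).im ∧ lat (q.P k) = 0)) := by
    unfold P; split_ifs with h
    · exact ⟨q.PS_re_pos _, Or.inl ⟨h, q.PS_im _, q.PS_lat _⟩⟩
    · exact ⟨q.PW_re_pos _, Or.inr ⟨h, q.PW_im _, q.PW_lat _⟩⟩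
  obtain ⟨hPr, hP⟩ := hP
  have hlat : ∀ w : ℂ, lat w = -sin phi * w.re + cos phi * w.im := fun w => by unfold lat; ring
  have hsub : ∀ α β c : ℝ, c ≤ α * (q.P k).re + β * (q.P k).im →
      c < α * (q.H (k-1)).re + β * (q.H (k-1)).im → c < α * (q.H k).re + β * (q.H k).im →
      z = q.P k ∨ c < α * z.re + β * z.im := by
    intro α β c e1 e2 e3
    have : convexHull ℝ (q.BT k) ⊆ _ := convexHull_min (by
      rintro w (rfl | rfl | rfl)
      · right; assumption
      · right; assumption
      · left; rfl) (convex_lt_or α β c (q.P k) e1)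
    exact this hz
  have r1 := hsub 1 0 0 (by linarith) (by linarith [h1.re]) (by linarith [h2.re])
  have r2 := hsub 0 1 0 (by rcases hP with h | h <;> linarith [h.2.1]) (by linarith [h1.im])
    (by linarith [h2.im])
  have r3 := hsub (sin phi) (-cos phi) 0
    (by rcases hP with h | h <;> linarith [h.2.2, hlat (q.P k)]) (by linarith [h1.lat, hlat (q.H (k-1))])
    (by linarith [h2.lat, hlat (q.H k)])
  by_cases hzP : z = q.P k
  · refine ⟨by rw [hzP]; exact hPr, ?_, ?_, fun _ => hzP⟩
    · rw [hzP]; rcases hP with h | h <;> linarith [h.2.1]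
    · rw [hzP]; rcases hP with h | h <;> linarith [h.2.2]
  · have r1 := r1.resolve_left hzP
    have r2 := r2.resolve_left hzP
    have r3 := r3.resolve_left hzP
    have := hlat z
    refine ⟨by linarith, by linarith, by linarith, ?_⟩
    rintro (h | h) <;> linarith

theorem BT_dir (k : ZMod 19) : ∃ x y z, q.BT k = {x, y, z} ∧ TriDir x y z (q.th k) := by
  by_cases h : k.val < 10
  · rw [q.BT_lt k h]
    refine ⟨_, _, _, rfl, ?_⟩
    have := q.S_dir k.val
    unfold th; rwa [if_pos h]
  · rw [q.BT_ge k h]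
    refine ⟨_, _, _, rfl, ?_⟩
    have := q.W_dir (18 - k.val)
    unfold th; rwa [if_neg h]

theorem triDir_pairs {x y z : ℂ} {θ : ℝ} (h : TriDir x y z θ) :
    ∀ u ∈ ({x, y, z} : Set ℂ), ∀ v ∈ ({x, y, z} : Set ℂ), u ≠ v →
      (v - u) ^ 6 = Complex.exp (θ * Complex.I) ^ 6 ∧ ‖v - u‖ = 1 := by
  obtain ⟨w, hw, h1, h2⟩ := h
  set d := Complex.exp (θ * Complex.I)
  have hd : ‖d‖ = 1 := Complex.norm_exp_ofReal_mul_I θ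
  have hw3 : w ^ 3 = -1 := by linear_combination (w + 1) * hw
  have hw6 : w ^ 6 = 1 := by linear_combination (w ^ 3 - 1) * hw3
  have hzy : z - y = d * w ^ 2 := by linear_combination h2 - h1 - d * hw
  have key : ∀ e : ℂ, (e ^ 6 = d ^ 6 ∧ ‖e‖ = 1) → ((-e) ^ 6 = d ^ 6 ∧ ‖-e‖ = 1) := by
    rintro e ⟨h, h'⟩
    exact ⟨by rw [← h]; ring, by rw [norm_neg, h']⟩
  have hnw : ‖w‖ = 1 := by
    have : ‖w‖ ^ 6 = 1 := by rw [← norm_pow, hw6, norm_one]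
    exact (pow_eq_one_iff_of_nonneg (norm_nonneg _) (by norm_num)).1 this
  have k1 : (y - x) ^ 6 = d ^ 6 ∧ ‖y - x‖ = 1 := by rw [h1]; exact ⟨rfl, hd⟩
  have k2 : (z - x) ^ 6 = d ^ 6 ∧ ‖z - x‖ = 1 := by
    rw [h2]; exact ⟨by rw [mul_pow, hw6, mul_one], by rw [norm_mul, hd, hnw, one_mul]⟩
  have k3 : (z - y) ^ 6 = d ^ 6 ∧ ‖z - y‖ = 1 := by
    rw [hzy]
    exact ⟨by linear_combination (d ^ 6 * (w ^ 6 + 1)) * hw6, by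
      rw [norm_mul, norm_pow, hd, hnw]; norm_num⟩
  rintro u (rfl | rfl | rfl) v (rfl | rfl | rfl) huv
  · exact absurd rfl huv
  · exact k1
  · exact k2
  · rw [← neg_sub]; exact key _ k1
  · exact absurd rfl huv
  · exact k3
  · rw [← neg_sub]; exact key _ k2
  · rw [← neg_sub]; exact key _ k3
  · exact absurd rfl huv

theorem BT_pairs (k : ZMod 19) : ∀ u ∈ q.BT k, ∀ v ∈ q.BT k, u ≠ v →
      (v - u) ^ 6 = Complex.exp (q.th k * Complex.I) ^ 6 ∧ ‖v - u‖ = 1 := by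
  obtain ⟨x, y, z, h, h'⟩ := q.BT_dir k
  rw [h]; exact triDir_pairs h'

end Par
end RingGraph

namespace RingGraph
open Real
namespace Par
variable (q : Par)

/-! ### The two hundred cells -/

/-- The hundredth roots of unity. -/
def Z (n : ZMod 100) : ℂ := (ZMod.toCircle n : ℂ)

theorem Z_add (m n : ZMod 100) : Z (m + n) = Z m * Z n := by
  simp [Z, AddChar.map_add_eq_mul]
theorem Z_norm (n : ZMod 100) : ‖Z n‖ = 1 := Circle.norm_coe _
theorem Z_ne (n : ZMod 100) : Z n ≠ 0 := by
  intro h; have := Z_norm n; rw [h] at this; simp at this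
theorem Z_exp (n : ZMod 100) : Z n = Complex.exp ((2 * phi * n.val : ℝ) * Complex.I) := by
  have h : ((n.val : ℤ) : ZMod 100) = n := by simp
  conv_lhs => rw [← h]
  rw [Z, ZMod.toCircle_intCast]
  congr 1
  push_cast [phi]; ring
theorem Z_one : Z 1 = Complex.exp ((2 * phi : ℝ) * Complex.I) := by
  rw [Z_exp, show (1 : ZMod 100).val = 1 from rfl]; simp

abbrev Cell := ZMod 100 × Bool

/-- The reflection (composed with a rotation) placing the base cell at the cell `c`. -/
def gm (c : Cell) : ℂ →ₗ[ℝ] ℂ :=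
  (LinearMap.mulLeft ℝ (Z c.1)) ∘ₗ
    (if c.2 then (Complex.conjAe.toLinearMap : ℂ →ₗ[ℝ] ℂ) else LinearMap.id)

theorem gm_false (n : ZMod 100) (z : ℂ) : gm (n, false) z = Z n * z := by simp [gm]
theorem gm_true (n : ZMod 100) (z : ℂ) : gm (n, true) z = Z n * (starRingEnd ℂ) z := by
  simp [gm]

theorem gm_norm (c : Cell) (z : ℂ) : ‖gm c z‖ = ‖z‖ := by
  obtain ⟨n, _ | _⟩ := c
  · rw [gm_false, norm_mul, Z_norm, one_mul]
  · rw [gm_true, norm_mul, Z_norm, one_mul, RCLike.norm_conj]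

theorem gm_inj (c : Cell) : Function.Injective (gm c) := by
  intro x y h
  have h2 : ‖gm c (x - y)‖ = 0 := by rw [map_sub, h, sub_self, norm_zero]
  rw [gm_norm] at h2
  exact sub_eq_zero.1 (norm_eq_zero.1 h2)

def ang (c : Cell) (α : ℝ) : ℝ := 2 * phi * c.1.val + (if c.2 then -α else α)

theorem gm_exp (c : Cell) (α : ℝ) :
    gm c (Complex.exp (α * Complex.I)) = Complex.exp (ang c α * Complex.I) := by
  obtain ⟨n, _ | _⟩ := c
  · rw [gm_false, Z_exp, ← Complex.exp_add]; congr 1; simp [ang]; ring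
  · rw [gm_true, Z_exp, ← Complex.exp_conj, ← Complex.exp_add]; congr 1; simp [ang]; ring

theorem gm_polar (c : Cell) (r α : ℝ) :
    gm c (r * Complex.exp (α * Complex.I)) = r * Complex.exp (ang c α * Complex.I) := by
  rw [← gm_exp, ← Complex.real_smul, map_smul, Complex.real_smul]

/-- Membership in the closed base cone. -/
structure InCl (z : ℂ) : Prop where
  re : 0 < z.re
  im : 0 ≤ z.im
  lat : lat z ≤ 0

theorem lat_polar (r α : ℝ) : lat (r * Complex.exp (α * Complex.I)) = r * sin (α - phi) := by
  rw [lat, sin_sub, Complex.re_ofReal_mul, Complex.im_ofReal_mul, Complex.exp_ofReal_mul_I_re,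
    Complex.exp_ofReal_mul_I_im]; ring

theorem InCl.polar {z : ℂ} (h : InCl z) :
    ∃ r α : ℝ, 0 < r ∧ 0 ≤ α ∧ α ≤ phi ∧ z = r * Complex.exp (α * Complex.I) := by
  have hz : z ≠ 0 := by rintro rfl; exact lt_irrefl _ h.re
  have hr : 0 < ‖z‖ := norm_pos_iff.2 hz
  have h0 : 0 ≤ z.arg := Complex.arg_nonneg_iff.2 h.im
  have h2 : z.arg < π / 2 := by
    have := Complex.abs_arg_lt_pi_div_two_iff.2 (Or.inl h.re)
    exact (abs_lt.1 this).2
  refine ⟨‖z‖, z.arg, hr, h0, ?_, (Complex.norm_mul_exp_arg_mul_I z).symm⟩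
  by_contra hc
  push Not at hc
  have hl := h.lat
  rw [← Complex.norm_mul_exp_arg_mul_I z, lat_polar] at hl
  have : 0 < sin (z.arg - phi) := sin_pos' (by linarith) (by
    have := phi_pos; have := pi_pos; linarith)
  have := mul_pos hr this
  linarith

theorem exp_eq_iff {x y : ℝ} (h : Complex.exp (x * Complex.I) = Complex.exp (y * Complex.I)) :
    ∃ k : ℤ, x = y + k * (2 * π) := by
  obtain ⟨k, hk⟩ := Complex.exp_eq_exp_iff_exists_int.1 h
  refine ⟨k, ?_⟩
  have := congrArg Complex.im hk
  simpa using this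

/-- The cell across the ray of angle `phi`. -/
def wpart : Cell → Cell
  | (n, false) => (n + 1, true)
  | (n, true) => (n - 1, false)
def spart : Cell → Cell
  | (n, β) => (n, !β)

theorem core {c c' : Cell} {z z' : ℂ} (hz : InCl z) (hz' : InCl z') (h : gm c z = gm c' z') :
    z = z' ∧ (c = c' ∨ (z.im = 0 ∧ c' = spart c) ∨ (lat z = 0 ∧ c' = wpart c)) := by
  obtain ⟨r, α, hr, hα, hα', rfl⟩ := hz.polar
  obtain ⟨r', α', hr', hβ, hβ', rfl⟩ := hz'.polar
  have hrr : r = r' := by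
    have := congrArg (‖·‖) h
    simp only [gm_norm, norm_mul, Complex.norm_exp_ofReal_mul_I, mul_one, Complex.norm_real,
      Real.norm_eq_abs, abs_of_pos hr, abs_of_pos hr'] at this
    exact this
  subst hrr
  rw [gm_polar, gm_polar] at h
  have h := mul_left_cancel₀ (by exact_mod_cast hr.ne') h
  obtain ⟨k, hk⟩ := exp_eq_iff h
  have hpi : 2 * π = 2 * phi * 100 := by unfold phi; ring
  have hp := phi_pos
  obtain ⟨n, β⟩ := c
  obtain ⟨n', β'⟩ := c'
  simp only [ang] at hk
  rw [hpi] at hk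
  set δ : ℤ := n.val - n'.val - 100 * k with hδ
  have hδ' : ((n.val : ℝ) - n'.val - 100 * k) = (δ : ℝ) := by rw [hδ]; push_cast; ring
  have hn : n = n' + (δ : ZMod 100) := by
    rw [hδ]; push_cast
    have : (100 : ZMod 100) = 0 := rfl
    rw [ZMod.natCast_zmod_val, ZMod.natCast_zmod_val, this]; ring
  have hm : 2 * phi * δ = (if β' then -α' else α') - (if β then -α else α) := by
    rw [← hδ']; linarith
  have up : ∀ m : ℤ, 2 * phi * δ < 2 * phi * m → δ < m := fun m hh => by
    have := lt_of_mul_lt_mul_left hh (by linarith)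
    exact_mod_cast this
  have dn : ∀ m : ℤ, 2 * phi * m < 2 * phi * δ → m < δ := fun m hh => by
    have := lt_of_mul_lt_mul_left hh (by linarith)
    exact_mod_cast this
  have im0 : α = 0 → ((r : ℂ) * Complex.exp (α * Complex.I)).im = 0 := by rintro rfl; simp
  have lat0 : α = phi → lat ((r : ℂ) * Complex.exp (α * Complex.I)) = 0 := by
    intro e; rw [lat_polar, e]; simp
  cases β <;> cases β' <;> simp only [if_true, if_false, Bool.false_eq_true] at hm
  · have a1 := up 1 (by push_cast; linarith)
    have a2 := dn (-1) (by push_cast; linarith)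
    have a3 : δ = 0 := by omega
    rw [a3] at hm hn
    have : α = α' := by push_cast at hm; linarith
    subst this
    exact ⟨rfl, Or.inl (by simp [hn])⟩
  · have a1 := up 1 (by push_cast; linarith)
    have a2 := dn (-2) (by push_cast; linarith)
    have a3 : δ = 0 ∨ δ = -1 := by omega
    rcases a3 with a3 | a3 <;> rw [a3] at hm hn
    · push_cast at hm
      have e1 : α = 0 := by linarith
      have e2 : α' = α := by linarith
      rw [e2]
      exact ⟨rfl, Or.inr (Or.inl ⟨im0 e1, by simp [hn, spart]⟩)⟩
    · push_cast at hm
      have e1 : α = phi := by linarith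
      have e2 : α' = α := by linarith
      rw [e2]
      exact ⟨rfl, Or.inr (Or.inr ⟨lat0 e1, by simp [hn, wpart]⟩)⟩
  · have a1 := up 2 (by push_cast; linarith)
    have a2 := dn (-1) (by push_cast; linarith)
    have a3 : δ = 0 ∨ δ = 1 := by omega
    rcases a3 with a3 | a3 <;> rw [a3] at hm hn
    · push_cast at hm
      have e1 : α = 0 := by linarith
      have e2 : α' = α := by linarith
      rw [e2]
      exact ⟨rfl, Or.inr (Or.inl ⟨im0 e1, by simp [hn, spart]⟩)⟩
    · push_cast at hm
      have e1 : α = phi := by linarith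
      have e2 : α' = α := by linarith
      rw [e2]
      exact ⟨rfl, Or.inr (Or.inr ⟨lat0 e1, by simp [hn, wpart]⟩)⟩
  · have a1 := up 1 (by push_cast; linarith)
    have a2 := dn (-1) (by push_cast; linarith)
    have a3 : δ = 0 := by omega
    rw [a3] at hm hn
    have : α = α' := by push_cast at hm; linarith
    subst this
    exact ⟨rfl, Or.inl (by simp [hn])⟩

def part (k : ZMod 19) (c : Cell) : Cell := if k.val < 10 then spart c else wpart c

theorem part_ne (k : ZMod 19) (c : Cell) : part k c ≠ c := by
  obtain ⟨n, _ | _⟩ := c <;> unfold part <;> split_ifs <;> simp [spart, wpart]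

theorem P_im_lat (k : ZMod 19) :
    ((q.P k).im = 0 → k.val < 10) ∧ (lat (q.P k) = 0 → ¬ k.val < 10) := by
  unfold P; split_ifs with h
  · exact ⟨fun _ => h, fun e => absurd e (q.PS_lat _).ne⟩
  · exact ⟨fun e => absurd e (q.PW_im _).ne', fun _ => h⟩

theorem H_ne_P (k k' : ZMod 19) : q.H k ≠ q.P k' := by
  intro h
  have h1 := q.H_in k
  rw [h] at h1
  unfold P at h1
  split_ifs at h1
  · exact absurd h1.im (by rw [q.PS_im]; exact lt_irrefl _)
  · exact absurd h1.lat (by rw [q.PW_lat]; exact lt_irrefl _)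

theorem hull_core {c c' : Cell} {k k' : ZMod 19} {z z' : ℂ} (hz : z ∈ convexHull ℝ (q.BT k))
    (hz' : z' ∈ convexHull ℝ (q.BT k')) (h : gm c z = gm c' z') :
    z = z' ∧ (c = c' ∨ (k = k' ∧ z = q.P k ∧ c' = part k c)) := by
  obtain ⟨a1, a2, a3, a4⟩ := q.hull_in k hz
  obtain ⟨b1, b2, b3, b4⟩ := q.hull_in k' hz'
  obtain ⟨rfl, hh⟩ := core ⟨a1, a2, a3⟩ ⟨b1, b2, b3⟩ h
  refine ⟨rfl, ?_⟩
  rcases hh with h | ⟨h, e⟩ | ⟨h, e⟩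
  · exact Or.inl h
  · have e1 := a4 (Or.inl h)
    have e2 := b4 (Or.inl h)
    right
    refine ⟨q.P_inj (e1.symm.trans e2), e1, ?_⟩
    rw [e1] at h
    rw [part, if_pos ((q.P_im_lat k).1 h), e]
  · have e1 := a4 (Or.inr h)
    have e2 := b4 (Or.inr h)
    right
    refine ⟨q.P_inj (e1.symm.trans e2), e1, ?_⟩
    rw [e1] at h
    rw [part, if_neg ((q.P_im_lat k).2 h), e]

theorem lat_refl {z : ℂ} (h : lat z = 0) : Z 1 * (starRingEnd ℂ) z = z := by
  have hs := Real.sin_sq_add_cos_sq phi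
  unfold lat at h
  rw [Z_one]
  apply Complex.ext
  · simp only [Complex.mul_re, Complex.exp_ofReal_mul_I_re, Complex.exp_ofReal_mul_I_im,
      Complex.conj_re, Complex.conj_im, cos_two_mul, sin_two_mul]
    linear_combination (2 * sin phi) * h + 2 * z.re * hs
  · simp only [Complex.mul_im, Complex.exp_ofReal_mul_I_re, Complex.exp_ofReal_mul_I_im,
      Complex.conj_re, Complex.conj_im, cos_two_mul, sin_two_mul]
    linear_combination (-2 * cos phi) * h

theorem P_part (k : ZMod 19) (c : Cell) : gm (part k c) (q.P k) = gm c (q.P k) := by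
  obtain ⟨n, β⟩ := c
  by_cases h : k.val < 10
  · have him : (q.P k).im = 0 := by rw [P, if_pos h, PS_im]
    have hc : (starRingEnd ℂ) (q.P k) = q.P k := Complex.conj_eq_iff_im.2 him
    cases β <;> simp [part, h, spart, gm_true, gm_false, hc]
  · have hl : lat (q.P k) = 0 := by rw [P, if_neg h, PW_lat]
    have := lat_refl hl
    cases β <;> simp only [part, h, wpart, gm_true, gm_false, if_false]
    · rw [Z_add, mul_assoc, this]
    · conv_lhs => rw [← this]
      rw [← mul_assoc, ← Z_add, sub_add_cancel]

/-! ### The triangles -/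

abbrev Idx := Cell × ZMod 19

def tau (i : Idx) : Finset ℂ :=
  {gm i.1 (q.H (i.2 - 1)), gm i.1 (q.H i.2), gm i.1 (q.P i.2)}

theorem tau_coe (i : Idx) : (q.tau i : Set ℂ) = gm i.1 '' q.BT i.2 := by
  simp [tau, BT, Set.image_insert_eq]

theorem mem_tau {i : Idx} {v : ℂ} : v ∈ q.tau i ↔ ∃ w ∈ q.BT i.2, gm i.1 w = v := by
  rw [← Finset.mem_coe, tau_coe]; rfl

theorem one_ne19 (k : ZMod 19) : k - 1 ≠ k := by
  intro h; have : (1 : ZMod 19) = 0 := by linear_combination -h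
  exact absurd this (by decide)

theorem tau_card (i : Idx) : (q.tau i).card = 3 := by
  unfold tau
  refine Finset.card_eq_three.2 ⟨_, _, _, ?_, ?_, ?_, rfl⟩
  · intro h; exact one_ne19 _ (q.H_inj (gm_inj _ h))
  · intro h; exact q.H_ne_P _ _ (gm_inj _ h)
  · intro h; exact q.H_ne_P _ _ (gm_inj _ h)

theorem hull_tau (i : Idx) :
    convexHull ℝ (q.tau i : Set ℂ) = gm i.1 '' convexHull ℝ (q.BT i.2) := by
  rw [tau_coe, LinearMap.image_convexHull]

theorem tau_touch {i l : Idx} (h : i ≠ l) : Touch (q.tau i : Set ℂ) (q.tau l : Set ℂ) := by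
  obtain ⟨c, k⟩ := i
  obtain ⟨c', k'⟩ := l
  unfold Touch
  rw [hull_tau, hull_tau]
  by_cases hc : c = c'
  · subst hc
    have hk : k ≠ k' := fun e => h (by rw [e])
    dsimp only
    rw [← Set.image_inter (gm_inj c)]
    exact (q.touch_base hk).image _
  · have : ∀ v ∈ gm c '' convexHull ℝ (q.BT k) ∩ (gm c') '' convexHull ℝ (q.BT k'),
        v = gm c (q.P k) := by
      rintro v ⟨⟨z, hz, rfl⟩, z', hz', e⟩
      obtain ⟨-, h⟩ := q.hull_core hz hz' e.symm
      rcases h with h | ⟨-, h, -⟩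
      · exact absurd h hc
      · rw [h]
    intro x hx y hy
    rw [this x hx, this y hy]

theorem mem_hull {k : ZMod 19} {w : ℂ} (h : w ∈ q.BT k) : w ∈ convexHull ℝ (q.BT k) :=
  subset_convexHull ℝ _ h

/-- The two triangles at a vertex. -/
theorem tau_two {i : Idx} {v : ℂ} (hv : v ∈ q.tau i) :
    ∃ j : Idx, (j = (i.1, i.2 - 1) ∨ j = (i.1, i.2 + 1) ∨ j = (part i.2 i.1, i.2)) ∧
      v ∈ q.tau j ∧ ∀ l, v ∈ q.tau l → l = i ∨ l = j := by
  obtain ⟨c, k⟩ := i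
  obtain ⟨w, hw, rfl⟩ := q.mem_tau.1 hv
  dsimp only at hw ⊢
  have key : ∀ c' k', gm c w ∈ q.tau (c', k') →
      (c = c' ∧ w ∈ q.BT k') ∨ (k = k' ∧ w = q.P k ∧ c' = part k c) := by
    intro c' k' h
    obtain ⟨w', hw', e⟩ := q.mem_tau.1 h
    obtain ⟨rfl, h⟩ := q.hull_core (q.mem_hull hw) (q.mem_hull hw') e.symm
    rcases h with h | h
    · exact Or.inl ⟨h, hw'⟩
    · exact Or.inr h
  rcases hw with rfl | rfl | rfl
  · refine ⟨_, Or.inl rfl, by simp [tau], ?_⟩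
    rintro ⟨c', k'⟩ h
    rcases key c' k' h with ⟨rfl, h | h | h⟩ | ⟨-, h, -⟩
    · left; rw [sub_left_injective (q.H_inj h)]
    · right; rw [q.H_inj h]
    · exact absurd h (q.H_ne_P _ _)
    · exact absurd h (q.H_ne_P _ _)
  · refine ⟨_, Or.inr (Or.inl rfl), by simp [tau], ?_⟩
    rintro ⟨c', k'⟩ h
    rcases key c' k' h with ⟨rfl, h | h | h⟩ | ⟨-, h, -⟩
    · right; rw [q.H_inj h, sub_add_cancel]
    · left; rw [q.H_inj h]
    · exact absurd h (q.H_ne_P _ _)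
    · exact absurd h (q.H_ne_P _ _)
  · refine ⟨_, Or.inr (Or.inr rfl), by simp [tau, P_part], ?_⟩
    rintro ⟨c', k'⟩ h
    rcases key c' k' h with ⟨rfl, h | h | h⟩ | ⟨rfl, -, h⟩
    · exact absurd h.symm (q.H_ne_P _ _)
    · exact absurd h.symm (q.H_ne_P _ _)
    · left; rw [q.P_inj h]
    · right; rw [h]

def dir (i : Idx) : ℂ := Complex.exp (ang i.1 (q.th i.2) * Complex.I) ^ 6

theorem gm_pow (c : Cell) {x y : ℂ} (h : x ^ 6 = y ^ 6) : gm c x ^ 6 = gm c y ^ 6 := by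
  obtain ⟨n, _ | _⟩ := c
  · rw [gm_false, gm_false, mul_pow, mul_pow, h]
  · rw [gm_true, gm_true, mul_pow, mul_pow, ← map_pow, h, map_pow]

theorem tau_pairs (i : Idx) {u v : ℂ} (hu : u ∈ q.tau i) (hv : v ∈ q.tau i) (h : u ≠ v) :
    (v - u) ^ 6 = q.dir i ∧ ‖v - u‖ = 1 := by
  obtain ⟨x, hx, rfl⟩ := q.mem_tau.1 hu
  obtain ⟨y, hy, rfl⟩ := q.mem_tau.1 hv
  have hxy : x ≠ y := by rintro rfl; exact h rfl
  obtain ⟨h1, h2⟩ := q.BT_pairs _ x hx y hy hxy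
  rw [← map_sub, gm_norm, dir, ← gm_exp]
  exact ⟨gm_pow _ h1, h2⟩

theorem pow_ne {x y : ℝ} (h0 : x ≠ y) (h : 6 * |x - y| < 2 * π) :
    Complex.exp (x * Complex.I) ^ 6 ≠ Complex.exp (y * Complex.I) ^ 6 := by
  intro e
  rw [← Complex.exp_nat_mul, ← Complex.exp_nat_mul] at e
  obtain ⟨k, hk⟩ := exp_eq_iff (x := 6 * x) (y := 6 * y) (by
    convert e using 2 <;> push_cast <;> ring)
  have hp := pi_pos
  have hk2 : 6 * (x - y) = k * (2 * π) := by linarith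
  have h2 : |(k : ℝ)| * (2 * π) < 1 * (2 * π) := by
    rw [← abs_of_pos (by linarith : 0 < 2 * π), ← abs_mul, ← hk2, abs_mul,
      abs_of_pos (by norm_num : (0:ℝ) < 6), abs_of_pos (by linarith : 0 < 2 * π)]
    linarith
  have h3 := lt_of_mul_lt_mul_right h2 (by linarith)
  have h4 : |k| < 1 := by exact_mod_cast h3
  rw [Int.abs_lt_one_iff] at h4
  rw [h4] at hk2
  apply h0
  push_cast at hk2
  linarith

theorem th_adj (k : ZMod 19) : q.th (k - 1) ≠ q.th k ∧ 6 * |q.th (k - 1) - q.th k| < 2 * π := by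
  have h1 := q.ha
  have h2 := q.hbt
  have h3 := q.ht
  have h4 := q.b_eq
  have h5 := phi_pos
  have l := val_lt k
  have key : ∀ x y : ℝ, (0 < x - y ∧ x - y < π / 3) ∨ (0 < y - x ∧ y - x < π / 3) →
      x ≠ y ∧ 6 * |x - y| < 2 * π := by
    rintro x y (⟨a1, a2⟩ | ⟨a1, a2⟩)
    · refine ⟨by intro e; linarith, ?_⟩
      rw [abs_of_pos a1]; linarith
    · refine ⟨by intro e; linarith, ?_⟩
      rw [abs_sub_comm, abs_of_pos a1]; linarith
  apply key
  unfold th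
  rw [val_pred]
  generalize k.val = m at l
  interval_cases m <;> simp [Nat.even_iff] <;>
    first
      | (left; constructor <;> linarith)
      | (right; constructor <;> linarith)

theorem dir_cell {c : Cell} {k k' : ZMod 19} (h : q.th k ≠ q.th k')
    (h' : 6 * |q.th k - q.th k'| < 2 * π) : q.dir (c, k) ≠ q.dir (c, k') := by
  have e : |ang c (q.th k) - ang c (q.th k')| = |q.th k - q.th k'| := by
    unfold ang; split_ifs
    · rw [abs_sub_comm (q.th k)]; congr 1; ring
    · congr 1; ring
  apply pow_ne
  · intro e2
    rw [e2, sub_self, abs_zero, eq_comm, abs_eq_zero] at e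
    exact h (sub_eq_zero.1 e)
  · dsimp only; rwa [e]

theorem th_cases (k : ZMod 19) : (k.val < 10 ∧ (q.th k = q.t ∨ q.th k = -q.t)) ∨
    (¬ k.val < 10 ∧ (q.th k = -q.a ∨ q.th k = q.b)) := by
  unfold th; split_ifs <;> simp_all

theorem dir_part (c : Cell) (k : ZMod 19) : q.dir (c, k) ≠ q.dir (part k c, k) := by
  have h1 := q.ha
  have h2 := q.hbt
  have h3 := q.ht
  have h4 := q.b_eq
  have h5 := phi_pos
  have key : ∀ x y : ℝ, (0 < x - y ∧ x - y < π / 3) ∨ (0 < y - x ∧ y - x < π / 3) →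
      Complex.exp (x * Complex.I) ^ 6 ≠ Complex.exp (y * Complex.I) ^ 6 := by
    rintro x y (⟨a1, a2⟩ | ⟨a1, a2⟩)
    · refine pow_ne (by intro e; linarith) ?_
      rw [abs_of_pos a1]; linarith
    · refine pow_ne (by intro e; linarith) ?_
      rw [abs_sub_comm, abs_of_pos a1]; linarith
  have base : ∀ n : ZMod 100, q.dir ((n, false), k) ≠ q.dir (part k (n, false), k) := by
    intro n
    unfold part
    rcases q.th_cases k with ⟨hk, h⟩ | ⟨hk, h⟩
    · rw [if_pos hk]
      apply key
      simp only [spart, ang]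
      rcases h with h | h <;> rw [h]
      · left; constructor <;> simp <;> linarith
      · right; constructor <;> simp <;> linarith
    · rw [if_neg hk]
      have e : q.dir (wpart (n, false), k) =
          Complex.exp ((ang (n, false) (2 * phi - q.th k) : ℝ) * Complex.I) ^ 6 := by
        rw [dir, ← gm_exp, ← gm_exp]
        simp only [wpart]
        rw [gm_true, gm_false, Z_add, Z_one, mul_assoc, ← Complex.exp_conj, ← Complex.exp_add]
        congr 3; simp; ring
      rw [e]
      apply key
      simp only [ang]
      rcases h with h | h <;> rw [h]
      · right; constructor <;> simp <;> linarith
      · left; constructor <;> simp <;> linarith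
  obtain ⟨n, _ | _⟩ := c
  · exact base n
  · have := base (part k (n, true)).1
    have e : part k (n, true) = ((part k (n, true)).1, false) := by
      unfold part; split_ifs <;> simp [spart, wpart]
    have e2 : part k (part k (n, true)) = (n, true) := by
      unfold part; split_ifs <;> simp [spart, wpart]
    rw [← e, e2] at this
    exact this.symm

theorem tau_dir {i l : Idx} (h : i ≠ l) {v : ℂ} (hi : v ∈ q.tau i) (hl : v ∈ q.tau l) :
    q.dir i ≠ q.dir l := by
  obtain ⟨j, hj, -, h2⟩ := q.tau_two hi
  have hlj := (h2 l hl).resolve_left (Ne.symm h)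
  subst hlj
  obtain ⟨c, k⟩ := i
  dsimp only at hj
  rcases hj with rfl | rfl | rfl
  · exact (q.dir_cell (q.th_adj k).1 (q.th_adj k).2).symm
  · have := q.th_adj (k + 1)
    rw [add_sub_cancel_right] at this
    exact q.dir_cell this.1 this.2
  · exact q.dir_part c k

theorem tau_two' {i : Idx} {v : ℂ} (hv : v ∈ q.tau i) :
    ∃ j : Idx, j ≠ i ∧ v ∈ q.tau j ∧ ∀ l, v ∈ q.tau l → l = i ∨ l = j := by
  obtain ⟨j, hj, h1, h2⟩ := q.tau_two hv
  refine ⟨j, ?_, h1, h2⟩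
  obtain ⟨c, k⟩ := i
  dsimp only at hj
  rcases hj with rfl | rfl | rfl
  · intro e; exact one_ne19 k (Prod.ext_iff.1 e).2
  · intro e
    have := one_ne19 (k + 1)
    rw [add_sub_cancel_right] at this
    exact this (Prod.ext_iff.1 e).2.symm
  · intro e; exact part_ne k c (Prod.ext_iff.1 e).1

theorem tau_rot (c : Cell) (k : ZMod 19) :
    q.tau ((c.1 + 1, c.2), k) = (q.tau (c, k)).image (fun z => Z 1 * z) := by
  have : ∀ z, gm (c.1 + 1, c.2) z = Z 1 * gm c z := by
    intro z
    obtain ⟨n, _ | _⟩ := c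
    · simp only [gm_false]; rw [Z_add]; ring
    · simp only [gm_true]; rw [Z_add]; ring
  simp [tau, this, Finset.image_insert]

end Par
end RingGraph

namespace RingGraph
open Real

/-- A finite system of unit triangles meeting in at most one point, two at each vertex. -/
structure Sys (I : Type) [Fintype I] where
  tau : I → Finset ℂ
  dir : I → ℂ
  card : ∀ i, (tau i).card = 3
  pairs : ∀ i, ∀ {u v : ℂ}, u ∈ tau i → v ∈ tau i → u ≠ v → (v - u) ^ 6 = dir i ∧ ‖v - u‖ = 1
  touch : ∀ {i l}, i ≠ l →
    (convexHull ℝ (tau i : Set ℂ) ∩ convexHull ℝ (tau l : Set ℂ)).Subsingleton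
  dirne : ∀ {i l}, i ≠ l → ∀ {v : ℂ}, v ∈ tau i → v ∈ tau l → dir i ≠ dir l
  two : ∀ {i} {v : ℂ}, v ∈ tau i → ∃ j, j ≠ i ∧ v ∈ tau j ∧ ∀ l, v ∈ tau l → l = i ∨ l = j

namespace Sys
variable {I : Type} [Fintype I] (s : Sys I)

def V : Finset ℂ := Finset.univ.biUnion s.tau
def E : Finset (Finset ℂ) := Finset.univ.biUnion fun i => (s.tau i).powersetCard 2

theorem mem_V {v : ℂ} : v ∈ s.V ↔ ∃ i, v ∈ s.tau i := by simp [V]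
theorem mem_E {e : Finset ℂ} : e ∈ s.E ↔ ∃ i, e ⊆ s.tau i ∧ e.card = 2 := by
  simp [E, Finset.mem_powersetCard]

theorem pair_E {x y : ℂ} (h : x ≠ y) :
    ({x, y} : Finset ℂ) ∈ s.E ↔ ∃ i, x ∈ s.tau i ∧ y ∈ s.tau i := by
  rw [mem_E]
  simp [Finset.insert_subset_iff, Finset.card_pair h]

theorem E_pair {e : Finset ℂ} (h : e ∈ s.E) :
    ∃ i x y, x ≠ y ∧ e = {x, y} ∧ x ∈ s.tau i ∧ y ∈ s.tau i := by
  obtain ⟨i, hi, hc⟩ := s.mem_E.1 h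
  obtain ⟨x, y, hxy, rfl⟩ := Finset.card_eq_two.1 hc
  exact ⟨i, x, y, hxy, rfl, hi (by simp), hi (by simp)⟩

def graph : UnitDistGraph where
  V := s.V
  E := s.E
  edge_sub := by
    intro e he x hx
    obtain ⟨i, hi, -⟩ := s.mem_E.1 he
    exact s.mem_V.2 ⟨i, hi hx⟩
  edge_pair := by
    intro e he
    obtain ⟨i, x, y, hxy, rfl, hx, hy⟩ := s.E_pair he
    refine ⟨x, y, hxy, rfl, ?_⟩
    rw [dist_comm, dist_eq_norm]
    exact (s.pairs i hx hy hxy).2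

theorem uniq {i l : I} {x y : ℂ} (h : x ≠ y) (h1 : x ∈ s.tau i) (h2 : y ∈ s.tau i)
    (h3 : x ∈ s.tau l) (h4 : y ∈ s.tau l) : i = l := by
  by_contra hn
  exact h (s.touch hn ⟨subset_convexHull ℝ _ h1, subset_convexHull ℝ _ h3⟩
    ⟨subset_convexHull ℝ _ h2, subset_convexHull ℝ _ h4⟩)

theorem tau_inj : Function.Injective s.tau := by
  intro i l h
  obtain ⟨x, hx, y, hy, hxy⟩ := Finset.one_lt_card.1 (by rw [s.card i]; norm_num : 1 < (s.tau i).card)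
  exact s.uniq hxy hx hy (h ▸ hx) (h ▸ hy)

theorem equilateral {A B : ℂ} (hA : ‖A‖ = 1) (hB : ‖B‖ = 1) (hAB : ‖A - B‖ = 1) :
    A ^ 6 = B ^ 6 := by
  have conv : ∀ w : ℂ, ‖w‖ = 1 → w * (starRingEnd ℂ) w = 1 := by
    intro w hw
    rw [Complex.mul_conj, Complex.normSq_eq_norm_sq, hw]; simp
  have h1 := conv A hA
  have h2 := conv B hB
  have h3 := conv _ hAB
  rw [map_sub] at h3
  have h4 : A ^ 2 + B ^ 2 = A * B := by
    linear_combination (A * B - B ^ 2) * h1 + (A * B - A ^ 2) * h2 - (A * B) * h3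
  have h5 : A ^ 3 = -B ^ 3 := by linear_combination (A + B) * h4
  linear_combination (A ^ 3 - B ^ 3) * h5

theorem isTri {t : Finset ℂ} : s.graph.IsUnitTriangle t ↔ ∃ i, t = s.tau i := by
  constructor
  · rintro ⟨-, hc, hE⟩
    obtain ⟨x, y, z, hxy, hxz, hyz, rfl⟩ := Finset.card_eq_three.1 hc
    obtain ⟨i, hi1, hi2⟩ := (s.pair_E hxy).1 (hE x (by simp) y (by simp) hxy)
    obtain ⟨l, hl1, hl2⟩ := (s.pair_E hxz).1 (hE x (by simp) z (by simp) hxz)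
    obtain ⟨m, hm1, hm2⟩ := (s.pair_E hyz).1 (hE y (by simp) z (by simp) hyz)
    obtain ⟨a1, a2⟩ := s.pairs i hi1 hi2 hxy
    obtain ⟨b1, b2⟩ := s.pairs l hl1 hl2 hxz
    obtain ⟨-, c2⟩ := s.pairs m hm2 hm1 hyz.symm
    have key := equilateral a2 b2 (by rw [sub_sub_sub_cancel_right]; exact c2)
    have hil : i = l := by
      by_contra hn
      exact s.dirne hn hi1 hl1 (by rw [← a1, ← b1, key])
    subst hil
    refine ⟨i, Finset.eq_of_subset_of_card_le ?_ (by rw [hc, s.card])⟩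
    simp [Finset.insert_subset_iff, hi1, hi2, hl2]
  · rintro ⟨i, rfl⟩
    refine ⟨fun x hx => s.mem_V.2 ⟨i, hx⟩, s.card i, fun x hx y hy hxy => ?_⟩
    exact (s.pair_E hxy).2 ⟨i, hx, hy⟩

theorem regular : s.graph.Regular4 := by
  intro v hv
  obtain ⟨i, hi⟩ := s.mem_V.1 hv
  obtain ⟨j, hji, hj, hu⟩ := s.two hi
  have e : {e | e ∈ s.graph.E ∧ v ∈ e} =
      (((s.tau i).erase v ∪ (s.tau j).erase v).image fun u => ({v, u} : Finset ℂ) :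
        Finset (Finset ℂ)) := by
    ext e
    simp only [Finset.coe_image, Set.mem_image, Finset.mem_coe, Finset.mem_union,
      Finset.mem_erase]
    constructor
    · rintro ⟨he, hve⟩
      obtain ⟨m, x, y, hxy, rfl, hx, hy⟩ := s.E_pair he
      have : ∃ u, u ≠ v ∧ u ∈ s.tau m ∧ v ∈ s.tau m ∧ ({v, u} : Finset ℂ) = {x, y} := by
        rcases Finset.mem_insert.1 hve with rfl | h
        · exact ⟨y, hxy.symm, hy, hx, rfl⟩
        · rw [Finset.mem_singleton] at h
          subst h
          exact ⟨x, hxy, hx, hy, Finset.pair_comm _ _⟩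
      obtain ⟨u, h1, h2, h3, h4⟩ := this
      refine ⟨u, ?_, h4⟩
      rcases hu m h3 with rfl | rfl
      · exact Or.inl ⟨h1, h2⟩
      · exact Or.inr ⟨h1, h2⟩
    · rintro ⟨u, hu', rfl⟩
      refine ⟨?_, by simp⟩
      rcases hu' with ⟨h1, h2⟩ | ⟨h1, h2⟩
      · exact (s.pair_E h1.symm).2 ⟨i, hi, h2⟩
      · exact (s.pair_E h1.symm).2 ⟨j, hj, h2⟩
  unfold UnitDistGraph.degree
  rw [e, Set.ncard_coe_finset, Finset.card_image_of_injOn, Finset.card_union_of_disjoint,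
    Finset.card_erase_of_mem hi, Finset.card_erase_of_mem hj, s.card, s.card]
  · rw [Finset.disjoint_left]
    intro u h1 h2
    rw [Finset.mem_erase] at h1 h2
    exact hji (s.uniq h1.1 h2.2 hj h1.2 hi)
  · intro u h1 w h2 h
    have hu1 : u ≠ v := by
      simp only [Finset.coe_union, Set.mem_union, Finset.mem_coe, Finset.mem_erase] at h1
      rcases h1 with h | h <;> exact h.1
    have : u ∈ ({v, w} : Finset ℂ) := by
      have h : ({v, u} : Finset ℂ) = {v, w} := h
      rw [← h]; simp
    rcases Finset.mem_insert.1 this with h | h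
    · exact absurd h hu1
    · exact Finset.mem_singleton.1 h

theorem nonOverlapping : s.graph.NonOverlapping := by
  intro t₁ t₂ h1 h2 hne
  obtain ⟨i, rfl⟩ := s.isTri.1 h1
  obtain ⟨l, rfl⟩ := s.isTri.1 h2
  have hil : i ≠ l := by rintro rfl; exact hne rfl
  have hs := (s.touch hil).anti (Set.inter_subset_inter
    (interior_subset (s := convexHull ℝ (s.tau i : Set ℂ)))
    (interior_subset (s := convexHull ℝ (s.tau l : Set ℂ))))
  have ho : IsOpen (interior (convexHull ℝ (s.tau i : Set ℂ)) ∩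
      interior (convexHull ℝ (s.tau l : Set ℂ))) := isOpen_interior.inter isOpen_interior
  rcases hs.eq_empty_or_singleton with h | ⟨x, h⟩
  · exact h
  · rw [h] at ho
    have := ho.interior_eq
    rw [interior_singleton] at this
    exact absurd this.symm (Set.singleton_ne_empty x)

theorem onlyUnit : s.graph.OnlyUnitTriangles := by
  intro e he
  obtain ⟨i, hi, -⟩ := s.mem_E.1 he
  exact ⟨s.tau i, s.isTri.2 ⟨i, rfl⟩, hi⟩

theorem count : s.graph.triangleCount = Fintype.card I := by
  have : {t : Finset ℂ | s.graph.IsUnitTriangle t} = (Finset.univ.image s.tau : Finset _) := by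
    ext t
    simp only [Set.mem_ofPred_eq, s.isTri, Finset.coe_image, Finset.coe_univ, Set.image_univ,
      Set.mem_range, eq_comm]
  rw [UnitDistGraph.triangleCount, this, Set.ncard_coe_finset,
    Finset.card_image_of_injective _ s.tau_inj, Finset.card_univ]

theorem cover {x u : ℂ} {L : ℝ} (hu : ‖u‖ = 1) (hL : 0 ≤ L)
    (h : s.graph.SideCovered x (x + L * u)) {t : ℝ} (h0 : 0 ≤ t) (h1 : t ≤ L) :
    ∃ i, ∃ a : ℝ, 0 ≤ a ∧ a ≤ t ∧ t ≤ a + 1 ∧ a + 1 ≤ L ∧ x + a * u ∈ s.tau i ∧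
      x + (a + 1 : ℝ) * u ∈ s.tau i := by
  obtain ⟨S, hS, hseg⟩ := h
  have hu0 : u ≠ 0 := by rintro rfl; simp at hu
  have param : ∀ p ∈ segment ℝ x (x + L * u), ∃ α : ℝ, 0 ≤ α ∧ α ≤ L ∧ p = x + α * u := by
    intro p hp
    rw [segment_eq_image'] at hp
    obtain ⟨θ, ⟨ha, hb⟩, rfl⟩ := hp
    refine ⟨θ * L, by positivity, by nlinarith, ?_⟩
    simp; ring
  have ht : x + t * u ∈ segment ℝ x (x + L * u) := by
    rcases hL.eq_or_lt with rfl | hL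
    · have : t = 0 := le_antisymm h1 h0
      subst this
      simp
    · rw [segment_eq_image']
      refine ⟨t / L, ⟨by positivity, by rw [div_le_one hL]; exact h1⟩, ?_⟩
      have : (L : ℂ) ≠ 0 := by exact_mod_cast hL.ne'
      simp; field_simp
  have ht' := ht
  rw [hseg] at ht'
  simp only [Set.mem_iUnion] at ht'
  obtain ⟨e, he, hte⟩ := ht'
  obtain ⟨i, p, r, hpr, rfl, hp, hr⟩ := s.E_pair (hS he)
  have hsub : ∀ w ∈ ({p, r} : Finset ℂ), w ∈ segment ℝ x (x + L * u) := by
    intro w hw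
    rw [hseg]
    simp only [Set.mem_iUnion]
    exact ⟨_, he, subset_convexHull ℝ _ hw⟩
  obtain ⟨α, α0, α1, hα⟩ := param p (hsub p (by simp))
  obtain ⟨β, β0, β1, hβ⟩ := param r (hsub r (by simp))
  have hd := (s.pairs i hp hr hpr).2
  rw [hα, hβ] at hd
  have hd : |β - α| = 1 := by
    have e : x + β * u - (x + α * u) = ((β - α : ℝ) : ℂ) * u := by push_cast; ring
    rw [e, norm_mul, hu, mul_one, Complex.norm_real] at hd
    exact hd
  have hst : x + t * u ∈ segment ℝ p r := by
    have : UnitDistGraph.edgeSeg {p, r} = segment ℝ p r := by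
      simp [UnitDistGraph.edgeSeg, convexHull_pair]
    rwa [this] at hte
  obtain ⟨c, d, hc, hd', hcd, hcomb⟩ := hst
  have htv : t = c * α + d * β := by
    rw [hα, hβ] at hcomb
    simp only [Complex.real_smul] at hcomb
    have hcd' : (c : ℂ) + d = 1 := by exact_mod_cast hcd
    have : (t : ℂ) * u = (c * α + d * β : ℝ) * u := by
      push_cast; linear_combination -hcomb + x * hcd'
    exact_mod_cast mul_right_cancel₀ hu0 this
  have hc' : c = 1 - d := by linarith
  subst hc'
  rcases abs_eq (by norm_num : (0:ℝ) ≤ 1) |>.1 hd with h | h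
  · have hβα : β = α + 1 := by linarith
    subst hβα
    refine ⟨i, α, α0, by nlinarith, by nlinarith, β1, hα ▸ hp, ?_⟩
    rw [← hβ]; exact hr
  · have hβα : α = β + 1 := by linarith
    subst hβα
    refine ⟨i, β, β0, by nlinarith, by nlinarith, α1, hβ ▸ hr, ?_⟩
    rw [← hα]; exact hp

theorem cover_len {x u : ℂ} {L : ℝ} (hu : ‖u‖ = 1) (hL : 0 ≤ L)
    (h : s.graph.SideCovered x (x + L * u)) : L = 1 := by
  have hu0 : u ≠ 0 := by rintro rfl; simp at hu
  obtain ⟨i, a, ha0, ha1, -, ha3, hxi, hyi⟩ := s.cover hu hL h le_rfl hL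
  have ha : a = 0 := le_antisymm ha1 ha0
  subst ha
  simp only [zero_add] at hyi ha3
  refine le_antisymm ?_ ha3
  by_contra hgt
  push Not at hgt
  have hfin : {a : ℝ | x + a * u ∈ s.V}.Finite := by
    apply Set.Finite.preimage (f := fun a : ℝ => x + a * u) _ s.V.finite_toSet
    intro a _ b _ hab
    have := mul_right_cancel₀ hu0 (add_left_cancel hab)
    exact_mod_cast this
  have hev : ∀ᶠ t in nhdsWithin (1:ℝ) (Set.Ioi 1), ∀ a ∈ {a : ℝ | x + a * u ∈ s.V},
      a ≤ 1 ∨ t < a := by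
    rw [Filter.eventually_all_finite hfin]
    intro a _
    by_cases h : a ≤ 1
    · exact Filter.Eventually.of_forall fun _ => Or.inl h
    · push Not at h
      filter_upwards [Ioo_mem_nhdsGT h] with t ht using Or.inr ht.2
  obtain ⟨t, h1, h2⟩ := (hev.and (Ioo_mem_nhdsGT hgt)).exists
  obtain ⟨l, b, hb0, hb1, hb2, hb3, hpl, hql⟩ := s.cover hu hL h (by linarith [h2.1]) h2.2.le
  have hb : b ≤ 1 := by
    rcases h1 b (s.mem_V.2 ⟨l, hpl⟩) with h | h
    · exact h
    · linarith
  have hb' : 0 < b := by linarith [h2.1]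
  simp only [Complex.ofReal_zero, zero_mul, add_zero, Complex.ofReal_one, one_mul] at hxi hyi
  have hne : ∀ c : ℝ, 0 < c → ∀ w : ℂ, w ≠ w + c * u := by
    intro c hc w e
    have : (c : ℂ) * u = 0 := by linear_combination -e
    rcases mul_eq_zero.1 this with h | h
    · exact hc.ne' (by exact_mod_cast h)
    · exact hu0 h
  by_cases hil : i = l
  · subst hil
    have := (s.pairs i hxi hql (hne _ (by linarith) x)).2
    rw [add_sub_cancel_left, norm_mul, hu, mul_one, Complex.norm_real, Real.norm_eq_abs,
      abs_of_pos (by linarith)] at this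
    linarith
  · have hb1' : b = 1 := by
      have m1 : x + b * u ∈ convexHull ℝ (s.tau i : Set ℂ) := by
        have : x + b * u = x + b • ((x + u) - x) := by simp
        rw [this]
        exact (convex_convexHull ℝ _).add_smul_sub_mem (subset_convexHull ℝ _ hxi)
          (subset_convexHull ℝ _ hyi) ⟨hb0, hb⟩
      have m2 : x + u ∈ convexHull ℝ (s.tau l : Set ℂ) := by
        have : x + u = (x + b * u) + (1 - b) • ((x + (b + 1 : ℝ) * u) - (x + b * u)) := by
          simp; ring
        rw [this]
        exact (convex_convexHull ℝ _).add_smul_sub_mem (subset_convexHull ℝ _ hpl)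
          (subset_convexHull ℝ _ hql) ⟨by linarith, by linarith⟩
      have := s.touch hil ⟨m1, subset_convexHull ℝ _ hpl⟩ ⟨subset_convexHull ℝ _ hyi, m2⟩
      have h3 : (b : ℂ) * u = (1 : ℝ) * u := by
        simpa using add_left_cancel this
      exact_mod_cast mul_right_cancel₀ hu0 h3
    subst hb1'
    have e1 : x + ((1:ℝ) : ℂ) * u = x + u := by simp
    rw [e1] at hpl
    have d1 := (s.pairs i hxi hyi (by simpa using hne 1 one_pos x)).1
    have hq : x + ((1 + 1 : ℝ) : ℂ) * u = (x + u) + u := by push_cast; ring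
    rw [hq] at hql
    have d2 := (s.pairs l hpl hql (by simpa using hne 1 one_pos (x + u))).1
    rw [add_sub_cancel_left] at d1 d2
    exact s.dirne hil hyi hpl (d1.symm.trans d2)

theorem noAdditional : s.graph.NoAdditionalTriangles := by
  intro x _ y _ z _ hxy _ _ _ _ h _ _
  have hn : 0 < ‖y - x‖ := norm_pos_iff.2 (sub_ne_zero.2 hxy.symm)
  have hn' : (‖y - x‖ : ℂ) ≠ 0 := by exact_mod_cast hn.ne'
  have hy : y = x + (‖y - x‖ : ℝ) * ((y - x) / ‖y - x‖) := by
    field_simp; ring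
  rw [dist_comm, dist_eq_norm]
  refine s.cover_len (x := x) (u := (y - x) / ‖y - x‖) ?_ hn.le ?_
  · rw [norm_div, Complex.norm_real, norm_norm, div_self hn.ne']
  · rw [← hy]; exact h

theorem rotInv (c : ℂ) (θ : ℝ) (σ : I ≃ I)
    (hσ : ∀ i, s.tau (σ i) = (s.tau i).image (rot c θ)) : s.graph.RotInvariant c θ := by
  have hinj : Function.Injective (rot c θ) := by
    intro x y h
    unfold rot at h
    have := mul_left_cancel₀ (Complex.exp_ne_zero _) (add_left_cancel h)
    exact sub_left_injective this
  constructor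
  · ext v
    constructor
    · rintro ⟨w, hw, rfl⟩
      obtain ⟨i, hi⟩ := s.mem_V.1 hw
      exact s.mem_V.2 ⟨σ i, by rw [hσ]; exact Finset.mem_image_of_mem _ hi⟩
    · intro hv
      obtain ⟨i, hi⟩ := s.mem_V.1 hv
      rw [← σ.apply_symm_apply i, hσ] at hi
      obtain ⟨w, hw, rfl⟩ := Finset.mem_image.1 hi
      exact ⟨w, s.mem_V.2 ⟨_, hw⟩, rfl⟩
  · ext e
    constructor
    · rintro ⟨f, hf, rfl⟩
      obtain ⟨i, hi, hc⟩ := s.mem_E.1 hf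
      refine s.mem_E.2 ⟨σ i, ?_, ?_⟩
      · rw [hσ]; exact Finset.image_subset_image hi
      · rw [Finset.card_image_of_injective _ hinj, hc]
    · intro he
      obtain ⟨i, hi, hc⟩ := s.mem_E.1 he
      rw [← σ.apply_symm_apply i, hσ] at hi
      obtain ⟨f, hf, rfl⟩ := Finset.subset_image_iff.1 hi
      rw [Finset.card_image_of_injective _ hinj] at hc
      exact ⟨f, s.mem_E.2 ⟨_, by exact_mod_cast hf, hc⟩, rfl⟩

end Sys

def Par.sys (q : Par) : Sys Par.Idx where
  tau := q.tau
  dir := q.dir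
  card := q.tau_card
  pairs := fun i _ _ => q.tau_pairs i
  touch := q.tau_touch
  dirne := fun h _ => q.tau_dir h
  two := q.tau_two'

theorem main : ∃ G : UnitDistGraph, ∃ c : ℂ, G.Regular4 ∧ G.NonOverlapping ∧
      G.OnlyUnitTriangles ∧ G.NoAdditionalTriangles ∧
      G.triangleCount = 3800 ∧ G.RotInvariant c (2 * π / 100) := by
  obtain ⟨q⟩ := exists_par
  refine ⟨q.sys.graph, 0, q.sys.regular, q.sys.nonOverlapping, q.sys.onlyUnit,
    q.sys.noAdditional, ?_, ?_⟩
  · rw [q.sys.count]; simp [ZMod.card]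
  · refine q.sys.rotInv _ _
      (((Equiv.addRight (1 : ZMod 100)).prodCongr (Equiv.refl Bool)).prodCongr
        (Equiv.refl (ZMod 19))) ?_
    rintro ⟨c, k⟩
    have h : rot 0 (2 * π / 100) = fun z => Par.Z 1 * z := by
      funext z
      rw [Par.Z_one, rot, sub_zero, zero_add]
      congr 3
      rw [Par.phi]; congr 1; ring
    rw [h]
    exact q.tau_rot c k

end RingGraph

open Real in
/-- There exists a finite 4-regular straight-line
unit-distance graph (not necessarily planar) built from exactly
`3800 = 100 * 38` non-overlapping unit triangles, in which every edge lies in a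
unit triangle, with no additional triangles, invariant under rotation by
`2π/100` about some center. -/
theorem exists_four_regular_ring_graph_order_100_of_3800_triangles :
    ∃ G : UnitDistGraph, ∃ c : ℂ, G.Regular4 ∧ G.NonOverlapping ∧
      G.OnlyUnitTriangles ∧ G.NoAdditionalTriangles ∧
      G.triangleCount = 3800 ∧ G.RotInvariant c (2 * π / 100) := by
  exact RingGraph.main
end
end
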